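/- arXiv:1809.03965 — 2 statements merged into one kernel-verified Lean document; each statement's English description precedes it below -/
import Mathlib

section
/- Let F be a field of characteristic 2, a ∈ F with a ∉ ℘(F), and K = F[α] with α² + α = a. Let B be a biquaternion algebra over K and φ an Albert form over K whose Clifford algebra is K-isomorphic to M₂(B), and suppose there exist a central simple F-algebra B′ and positive integers n, m such that Mₙ(B) ≅ Mₘ(B′ ⊗_F K) as K-algebras (cor_{K/F}(B) = 0). Let 𝔽 be a finite field extension of F of odd degree; then X² + X + a remains irreducible over 𝔽, and 𝕂 = 𝔽[α] = 𝔽 ⊗_F K is a field. If there exists λ ∈ 𝕂^× such that the 𝔽-transfer s′_*(λ·φ_𝕂) of the scaled extended form φ_𝕂 (where s′ : 𝕂 → 𝔽 is the 𝔽-linear map with s′(1) = 0, s′(α) = 1) is hyperbolic over 𝔽, then there exists μ ∈ K^× such that s_*(μ·φ) is hyperbolic over F. -/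
/-!
The hypothesis on the odd extension `𝔽/F` is pushed down to `F` by a transfer argument, carried out
in the Witt group `WG` of nonsingular quadratic forms. In characteristic 2 every quadratic form is
the diagonal of a bilinear form, and forms are represented here by such bilinear forms; a form is
hyperbolic when it has a totally isotropic subspace of half the dimension (`HasLag`,
`HasLag.exists_hyperbolic`).

Choose a nonzero `F`-linear map `t : 𝔽 → F` and extend it to a `K`-linear map `T : 𝕂 → K`. Applying
`t` to the hyperbolic form `s′(λ φ_𝕂)` shows that the form `s(b ⊗ φ)` over `F` is hyperbolic, where
`b(x, y) = T(λ x y)` is a nondegenerate symmetric `K`-bilinear form on `𝕂`, of odd dimension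
`[𝕂 : K]`. Up to summands that become hyperbolic after tensoring with `φ`, `b` is diagonal
(`exists_diag`), say `b = ⟨c₁, …, cₙ⟩` with `n` odd. Put `μ = c₁ ⋯ cₙ`. The Arf invariant of `φ` is
trivial, so `φ` lies in `I²(K)` (`albertCls_mem_I2`), and therefore `b ⊗ φ` and `μ φ` agree modulo
`I⁴(K)` (`list_sum_odd`).

For the quadratic extension `K/F` the generators of `I⁴(K)` can be chosen with all but one slot in
`F`, whence the transfer maps `I⁴(K)` into `I⁴(F)` (`tr_mem_I4`). Thus `s(μ φ)` lies in `I⁴(F)`.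
Its dimension is 12, less than 16, and it is hyperbolic by the Hauptsatz of Arason and Pfister
(`hauptsatz`).

The Hauptsatz is proved by induction on the number of Pfister multiples in a sum. If the
anisotropic form `A` is Witt equivalent to such a sum, then over every extension where the last
Pfister form `π` becomes isotropic, `A` becomes hyperbolic by induction. Applied to quadratic
extensions, this shows that a multiple of `π` has all its values represented by `A`, over every
extension where `A` stays anisotropic (`exists_of_hasLag_quadratic`). By the subform theorem
(`card_le_of_represents`), a consequence of the Cassels–Pfister theorem (`cassels_pfister`), the
dimension of `A` is at least 16.
-/

open scoped TensorProduct
open Module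

/-- The binary quadratic form `c[1,d] : (x,y) ↦ c x² + c x y + c d y²` over a field `L`. -/
noncomputable def binQF {L : Type} [Field L] (c d : L) : QuadraticForm L (Fin 2 → L) :=
  Matrix.toQuadraticMap' !![c, c; 0, c * d]

/-- The 6-dimensional quadratic form `a₁[1,b₁] ⊥ a₂[1,b₂] ⊥ a₃[1,b₃]`. -/
noncomputable def albertQF {L : Type} [Field L] (a b : Fin 3 → L) :
    QuadraticForm L (Fin 3 → Fin 2 → L) :=
  ∑ i : Fin 3, (binQF (a i) (b i)).comp (LinearMap.proj i)

/-- The value of the orthogonal sum of `n` hyperbolic planes. -/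
def hypVal {L : Type} [Field L] {n : ℕ} (w : Fin n → Fin 2 → L) : L :=
  ∑ i, w i 0 * w i 1

/-- A quaternion algebra over `L`: a central simple `L`-algebra of dimension 4. -/
def IsQuaternionAlgebra (L A : Type) [Field L] [Ring A] [Algebra L A] : Prop :=
  Algebra.IsCentral L A ∧ IsSimpleRing A ∧ Module.finrank L A = 4

namespace AlbertDescent

set_option linter.unusedSectionVars false

/-! ### Nonsingular quadratic forms and Lagrangians -/

section Basics

variable {F : Type} [Field F]
variable {V V₁ V₂ V₃ : Type} [AddCommGroup V] [Module F V] [AddCommGroup V₁] [Module F V₁]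
  [AddCommGroup V₂] [Module F V₂] [AddCommGroup V₃] [Module F V₃]

/-- Nonsingularity of the quadratic form `x ↦ β x x`: its polar form has no radical. -/
def ND (β : V →ₗ[F] V →ₗ[F] F) : Prop := ∀ x, (∀ y, β x y + β y x = 0) → x = 0

/-- The quadratic form `x ↦ β x x` vanishes on a subspace of at least half the dimension. -/
def HasLag (β : V →ₗ[F] V →ₗ[F] F) : Prop :=
  ∃ W : Submodule F V, (∀ w ∈ W, β w w = 0) ∧ finrank F V ≤ 2 * finrank F W

/-- Orthogonal sum of two forms. -/
def osum (β₁ : V₁ →ₗ[F] V₁ →ₗ[F] F) (β₂ : V₂ →ₗ[F] V₂ →ₗ[F] F) :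
    (V₁ × V₂) →ₗ[F] (V₁ × V₂) →ₗ[F] F :=
  β₁.compl₁₂ (LinearMap.fst F V₁ V₂) (LinearMap.fst F V₁ V₂) +
    β₂.compl₁₂ (LinearMap.snd F V₁ V₂) (LinearMap.snd F V₁ V₂)

@[simp] lemma osum_apply (β₁ : V₁ →ₗ[F] V₁ →ₗ[F] F) (β₂ : V₂ →ₗ[F] V₂ →ₗ[F] F) (x y : V₁ × V₂) :
    osum β₁ β₂ x y = β₁ x.1 y.1 + β₂ x.2 y.2 := by simp [osum]

lemma ND.osum {β₁ : V₁ →ₗ[F] V₁ →ₗ[F] F} {β₂ : V₂ →ₗ[F] V₂ →ₗ[F] F} (h₁ : ND β₁) (h₂ : ND β₂) :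
    ND (osum β₁ β₂) := by
  rintro ⟨x₁, x₂⟩ h
  refine Prod.ext (h₁ _ fun y => ?_) (h₂ _ fun y => ?_)
  · simpa using h (y, 0)
  · simpa using h (0, y)

lemma ND.smul {β : V →ₗ[F] V →ₗ[F] F} (h : ND β) {c : F} (hc : c ≠ 0) : ND (c • β) := by
  intro x hx
  refine h x fun y => ?_
  have := hx y
  simp only [LinearMap.smul_apply, smul_eq_mul, ← mul_add] at this
  exact (mul_eq_zero.mp this).resolve_left hc

lemma isotropic_polar {β : V →ₗ[F] V →ₗ[F] F} {W : Submodule F V} (hW : ∀ w ∈ W, β w w = 0)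
    {x y : V} (hx : x ∈ W) (hy : y ∈ W) : β x y + β y x = 0 := by
  have h := hW _ (W.add_mem hx hy)
  simp only [map_add, LinearMap.add_apply, hW x hx, hW y hy] at h
  linear_combination h

lemma ND.polar_nondegenerate {β : V →ₗ[F] V →ₗ[F] F} (h : ND β) :
    LinearMap.BilinForm.Nondegenerate (β + β.flip) := by
  constructor
  · intro x hx; exact h x fun y => by simpa using hx y
  · intro x hx; exact h x fun y => by simpa [add_comm] using hx y

lemma HasLag.of_equiv {β₁ : V₁ →ₗ[F] V₁ →ₗ[F] F} {β₂ : V₂ →ₗ[F] V₂ →ₗ[F] F}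
    (e : V₁ ≃ₗ[F] V₂) (he : ∀ x, β₂ (e x) (e x) = β₁ x x) (h : HasLag β₁) : HasLag β₂ := by
  obtain ⟨W, hW, hd⟩ := h
  refine ⟨W.map e.toLinearMap, ?_, ?_⟩
  · rintro _ ⟨w, hw, rfl⟩
    simpa [he] using hW w hw
  · rw [← e.finrank_eq, LinearEquiv.finrank_map_eq e W]; exact hd

lemma ND.of_equiv {β₁ : V₁ →ₗ[F] V₁ →ₗ[F] F} {β₂ : V₂ →ₗ[F] V₂ →ₗ[F] F}
    (e : V₁ ≃ₗ[F] V₂) (he : ∀ x, β₂ (e x) (e x) = β₁ x x) (h : ND β₁) : ND β₂ := by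
  intro x hx
  have : e.symm x = 0 := by
    refine h _ fun y => ?_
    have h1 := he (e.symm x + y)
    have h2 := he (e.symm x)
    have h3 := he y
    simp only [map_add, LinearMap.add_apply, LinearEquiv.apply_symm_apply] at h1 h2 h3
    linear_combination hx (e y) + h2 + h3 - h1
  simpa using this

lemma finrank_submodule_prod [FiniteDimensional F V₁] [FiniteDimensional F V₂]
    (p : Submodule F V₁) (q : Submodule F V₂) :
    finrank F (p.prod q) = finrank F p + finrank F q := by
  let e : (p × q) ≃ₗ[F] p.prod q :=
    { toFun := fun x => ⟨(x.1, x.2), x.1.2, x.2.2⟩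
      invFun := fun x => (⟨x.1.1, x.2.1⟩, ⟨x.1.2, x.2.2⟩)
      map_add' := fun _ _ => rfl
      map_smul' := fun _ _ => rfl }
  rw [← e.finrank_eq, finrank_prod]

/-- Witt cancellation of a hyperbolic summand, by symplectic reduction. -/
lemma HasLag.cancel [FiniteDimensional F V₁] [FiniteDimensional F V₂]
    {β₁ : V₁ →ₗ[F] V₁ →ₗ[F] F} {β₂ : V₂ →ₗ[F] V₂ →ₗ[F] F} (h₁ : ND β₁) (h₂ : ND β₂)
    (h : HasLag (osum β₁ β₂)) (hl : HasLag β₂) : HasLag β₁ := by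
  obtain ⟨W, hW, hd⟩ := h
  obtain ⟨U, hU, hdU⟩ := hl
  let T : Submodule F (V₁ × V₂) := (⊤ : Submodule F V₁).prod U
  let Z : Submodule F (V₁ × V₂) := W ⊓ (⊥ : Submodule F V₁).prod U
  let f : (W ⊓ T : Submodule F (V₁ × V₂)) →ₗ[F] V₁ := (LinearMap.fst F V₁ V₂).domRestrict _
  refine ⟨LinearMap.range f, ?_, ?_⟩
  · rintro _ ⟨⟨⟨v, u⟩, hw, hu⟩, rfl⟩
    have h1 := hW _ hw
    have h2 := hU u hu.2
    have h3 : β₁ v v = 0 := by simpa [h2] using h1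
    exact h3
  have hsup : W ⊔ T ≤ LinearMap.BilinForm.orthogonal (osum β₁ β₂ + (osum β₁ β₂).flip) Z := by
    refine sup_le ?_ ?_
    · intro w hw z hz
      simpa [add_assoc] using isotropic_polar hW hz.1 hw
    · rintro ⟨v, u⟩ hu ⟨z1, z2⟩ ⟨hz, hz1, hz2⟩
      have : z1 = 0 := hz1
      subst this
      simpa using isotropic_polar hU hz2 hu.2
  have hsup' := Submodule.finrank_mono hsup
  rw [LinearMap.BilinForm.finrank_orthogonal (h₁.osum h₂).polar_nondegenerate] at hsup'
  have hinf := Submodule.finrank_sup_add_finrank_inf_eq W T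
  have hT : finrank F T = finrank F V₁ + finrank F U := by
    rw [finrank_submodule_prod]; simp
  have hf := LinearMap.finrank_range_add_finrank_ker f
  have hk : finrank F (LinearMap.ker f) ≤ finrank F Z := by
    let g : LinearMap.ker f →ₗ[F] Z :=
      LinearMap.codRestrict Z ((Submodule.subtype _).comp (Submodule.subtype _)) (by
        rintro ⟨⟨⟨v, u⟩, hw, hu⟩, hk⟩
        have hk' : v = 0 := hk
        exact ⟨hw, hk', hu.2⟩)
    refine LinearMap.finrank_le_finrank_of_injective (f := g) ?_
    intro a b hab
    apply Subtype.ext; apply Subtype.ext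
    exact congrArg (fun z : Z => (z : V₁ × V₂)) hab
  have hZ := Submodule.finrank_le Z
  rw [Module.finrank_prod] at *
  omega

end Basics

/-! ### The Witt group of quadratic forms in characteristic 2 -/

section Witt

variable {F : Type} [Field F]
variable {V V₁ V₂ V₃ : Type} [AddCommGroup V] [Module F V] [AddCommGroup V₁] [Module F V₁]
  [AddCommGroup V₂] [Module F V₂] [AddCommGroup V₃] [Module F V₃]

lemma HasLag.osum [FiniteDimensional F V₁] [FiniteDimensional F V₂]
    {β₁ : V₁ →ₗ[F] V₁ →ₗ[F] F} {β₂ : V₂ →ₗ[F] V₂ →ₗ[F] F}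
    (h₁ : HasLag β₁) (h₂ : HasLag β₂) : HasLag (osum β₁ β₂) := by
  obtain ⟨W₁, hW₁, hd₁⟩ := h₁
  obtain ⟨W₂, hW₂, hd₂⟩ := h₂
  refine ⟨W₁.prod W₂, fun w hw => by simp [hW₁ _ hw.1, hW₂ _ hw.2], ?_⟩
  rw [finrank_submodule_prod, finrank_prod]
  omega

lemma HasLag.smul {β : V →ₗ[F] V →ₗ[F] F} (h : HasLag β) (c : F) : HasLag (c • β) := by
  obtain ⟨W, hW, hd⟩ := h
  exact ⟨W, fun w hw => by simp [hW w hw], hd⟩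

lemma HasLag.comm {β₁ : V₁ →ₗ[F] V₁ →ₗ[F] F} {β₂ : V₂ →ₗ[F] V₂ →ₗ[F] F}
    (h : HasLag (AlbertDescent.osum β₁ β₂)) : HasLag (AlbertDescent.osum β₂ β₁) :=
  h.of_equiv (LinearEquiv.prodComm F V₁ V₂) fun x => by simp [add_comm]

lemma HasLag.prodProdProdComm {V₄ : Type} [AddCommGroup V₄] [Module F V₄]
    {β₁ : V₁ →ₗ[F] V₁ →ₗ[F] F} {β₂ : V₂ →ₗ[F] V₂ →ₗ[F] F} {β₃ : V₃ →ₗ[F] V₃ →ₗ[F] F}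
    {β₄ : V₄ →ₗ[F] V₄ →ₗ[F] F}
    (h : HasLag (AlbertDescent.osum (AlbertDescent.osum β₁ β₂) (AlbertDescent.osum β₃ β₄))) :
    HasLag (AlbertDescent.osum (AlbertDescent.osum β₁ β₃) (AlbertDescent.osum β₂ β₄)) :=
  h.of_equiv (LinearEquiv.prodProdProdComm F V₁ V₂ V₃ V₄) fun x => by
    simp only [osum_apply]
    exact add_add_add_comm _ _ _ _

/-- In characteristic 2 the graph of an isometry is totally isotropic in the orthogonal sum. -/
lemma HasLag.graph [CharP F 2] [FiniteDimensional F V₁] [FiniteDimensional F V₂]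
    {β₁ : V₁ →ₗ[F] V₁ →ₗ[F] F} {β₂ : V₂ →ₗ[F] V₂ →ₗ[F] F}
    (e : V₁ ≃ₗ[F] V₂) (he : ∀ x, β₂ (e x) (e x) = β₁ x x) :
    HasLag (AlbertDescent.osum β₁ β₂) := by
  refine ⟨LinearMap.range ((LinearMap.id : V₁ →ₗ[F] V₁).prod e.toLinearMap), ?_, ?_⟩
  · rintro _ ⟨x, rfl⟩
    simp [he, CharTwo.add_self_eq_zero]
  · rw [LinearMap.finrank_range_of_inj, finrank_prod, ← e.finrank_eq]
    · omega
    · intro x y h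
      simpa using congrArg Prod.fst h

/-- A nonsingular quadratic form `x ↦ β x x` on a finite-dimensional space, presented by a (not
necessarily symmetric) bilinear form `β`. -/
structure NSF (F : Type) [Field F] where
  /-- underlying space -/
  V : Type
  [acg : AddCommGroup V]
  [mod : Module F V]
  [fd : FiniteDimensional F V]
  /-- a bilinear form whose diagonal is the quadratic form -/
  β : V →ₗ[F] V →ₗ[F] F
  nd : ND β

attribute [instance] NSF.acg NSF.mod NSF.fd

lemma nd_punit : ND (0 : PUnit →ₗ[F] PUnit →ₗ[F] F) := fun _ _ => rfl

variable [CharP F 2]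

/-- Witt equivalence: in characteristic 2, `q ⊥ q'` hyperbolic. -/
def wittSetoid (F : Type) [Field F] [CharP F 2] : Setoid (NSF F) where
  r A B := HasLag (osum A.β B.β)
  iseqv :=
    { refl := fun A => HasLag.graph (LinearEquiv.refl F A.V) fun _ => rfl
      symm := fun h => h.comm
      trans := by
        intro A B C h₁ h₂
        refine HasLag.cancel (A.nd.osum C.nd) (B.nd.osum B.nd) ?_
          (HasLag.graph (LinearEquiv.refl F B.V) fun _ => rfl)
        exact (h₁.osum h₂.comm).prodProdProdComm }

/-- The Witt group of nonsingular quadratic forms over a field of characteristic 2. -/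
def WG (F : Type) [Field F] [CharP F 2] : Type 1 := Quotient (wittSetoid F)

/-- The Witt class of a nonsingular form. -/
def cls [FiniteDimensional F V] (β : V →ₗ[F] V →ₗ[F] F) (h : ND β) : WG F :=
  Quotient.mk (wittSetoid F) ⟨V, β, h⟩

lemma cls_eq_iff [FiniteDimensional F V₁] [FiniteDimensional F V₂]
    {β₁ : V₁ →ₗ[F] V₁ →ₗ[F] F} {β₂ : V₂ →ₗ[F] V₂ →ₗ[F] F} {h₁ : ND β₁} {h₂ : ND β₂} :
    cls β₁ h₁ = cls β₂ h₂ ↔ HasLag (osum β₁ β₂) :=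
  ⟨fun h => Quotient.exact h, fun h => Quotient.sound (s := wittSetoid F) h⟩

lemma cls_congr [FiniteDimensional F V₁] [FiniteDimensional F V₂]
    {β₁ : V₁ →ₗ[F] V₁ →ₗ[F] F} {β₂ : V₂ →ₗ[F] V₂ →ₗ[F] F} {h₁ : ND β₁} {h₂ : ND β₂}
    (e : V₁ ≃ₗ[F] V₂) (he : ∀ x, β₂ (e x) (e x) = β₁ x x) : cls β₁ h₁ = cls β₂ h₂ :=
  cls_eq_iff.2 (HasLag.graph e he)

lemma WG.ind {p : WG F → Prop}
    (h : ∀ (V : Type) [AddCommGroup V] [Module F V] [FiniteDimensional F V]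
      (β : V →ₗ[F] V →ₗ[F] F) (hβ : ND β), p (cls β hβ)) (w : WG F) : p w :=
  Quotient.ind (fun A => h A.V A.β A.nd) w

instance : Zero (WG F) := ⟨cls (0 : PUnit →ₗ[F] PUnit →ₗ[F] F) nd_punit⟩

instance : Add (WG F) := ⟨Quotient.map₂ (fun A B => ⟨A.V × B.V, osum A.β B.β, A.nd.osum B.nd⟩)
  (fun _ _ hA _ _ hB => (HasLag.osum hA hB).prodProdProdComm)⟩

lemma cls_add [FiniteDimensional F V₁] [FiniteDimensional F V₂]
    {β₁ : V₁ →ₗ[F] V₁ →ₗ[F] F} {β₂ : V₂ →ₗ[F] V₂ →ₗ[F] F} (h₁ : ND β₁) (h₂ : ND β₂) :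
    cls β₁ h₁ + cls β₂ h₂ = cls (osum β₁ β₂) (h₁.osum h₂) := rfl

lemma cls_eq_zero_iff [FiniteDimensional F V] {β : V →ₗ[F] V →ₗ[F] F} {h : ND β} :
    cls β h = 0 ↔ HasLag β := by
  rw [show (0 : WG F) = cls _ nd_punit from rfl, cls_eq_iff]
  let e : (V × PUnit) ≃ₗ[F] V := LinearEquiv.prodUnique
  constructor
  · intro h; exact h.of_equiv e fun x => by simp [e]
  · intro h; exact h.of_equiv e.symm fun x => by simp [e]

instance : Neg (WG F) := ⟨id⟩

lemma WG.add_self (w : WG F) : w + w = 0 := by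
  induction w using WG.ind with
  | h V β hβ =>
    rw [cls_add, cls_eq_zero_iff]
    exact HasLag.graph (LinearEquiv.refl F V) fun _ => rfl

instance : AddCommGroup (WG F) where
  add_assoc := by
    intro a b c
    induction a using WG.ind with | h V₁ β₁ h₁ => ?_
    induction b using WG.ind with | h V₂ β₂ h₂ => ?_
    induction c using WG.ind with | h V₃ β₃ h₃ => ?_
    exact cls_congr (LinearEquiv.prodAssoc F V₁ V₂ V₃) fun x => by simp [add_assoc]
  zero_add := by
    intro a
    induction a using WG.ind with | h V₁ β₁ h₁ => ?_
    exact cls_congr (LinearEquiv.uniqueProd) fun x => by simp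
  add_zero := by
    intro a
    induction a using WG.ind with | h V₁ β₁ h₁ => ?_
    exact cls_congr (LinearEquiv.prodUnique) fun x => by simp
  nsmul := nsmulRec
  zsmul := zsmulRec
  neg_add_cancel := WG.add_self
  add_comm := by
    intro a b
    induction a using WG.ind with | h V₁ β₁ h₁ => ?_
    induction b using WG.ind with | h V₂ β₂ h₂ => ?_
    exact cls_congr (LinearEquiv.prodComm F V₁ V₂) fun x => by simp [add_comm]

/-- Scaling of forms makes the Witt group a module over the group of units. -/
instance : SMul Fˣ (WG F) := ⟨fun c => Quotient.map
  (fun A => ⟨A.V, (c : F) • A.β, A.nd.smul c.ne_zero⟩) (by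
    intro A B h
    refine (HasLag.smul h (c : F)).of_equiv (LinearEquiv.refl F _) fun x => ?_
    simp [mul_add])⟩

lemma smul_cls [FiniteDimensional F V] (c : Fˣ) (β : V →ₗ[F] V →ₗ[F] F) (h : ND β) :
    c • cls β h = cls ((c : F) • β) (h.smul c.ne_zero) := rfl

instance : DistribMulAction Fˣ (WG F) where
  one_smul := by
    intro a
    induction a using WG.ind with | h V₁ β₁ h₁ => ?_
    exact cls_congr (LinearEquiv.refl F V₁) fun x => by simp
  mul_smul := by
    intro c d a
    induction a using WG.ind with | h V₁ β₁ h₁ => ?_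
    exact cls_congr (LinearEquiv.refl F V₁) fun x => by simp [mul_assoc]
  smul_zero := by
    intro c
    exact cls_congr (LinearEquiv.refl F PUnit) fun x => by simp
  smul_add := by
    intro c a b
    induction a using WG.ind with | h V₁ β₁ h₁ => ?_
    induction b using WG.ind with | h V₂ β₂ h₂ => ?_
    exact cls_congr (LinearEquiv.refl F (V₁ × V₂)) fun x => by simp [mul_add]

lemma sq_smul (c : Fˣ) (w : WG F) : (c * c) • w = w := by
  induction w using WG.ind with | h V β hβ => ?_
  rw [smul_cls]
  exact cls_congr (LinearEquiv.smulOfUnit c) fun x => by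
    simp [LinearEquiv.smulOfUnit, Units.smul_def]; ring

/-- `⟨u, v⟩ ≅ ⟨u + v, uv(u + v)⟩` for bilinear forms, as a relation in the Witt group. -/
lemma add_smul_rel (u v t : Fˣ) (h : (t : F) = u + v) (w : WG F) :
    u • w + v • w = t • w + (u * v * t) • w := by
  induction w using WG.ind with | h V β hβ => ?_
  simp only [smul_cls, cls_add]
  symm
  have h2 : (2 : F) = 0 := CharTwo.two_eq_zero
  let f : (V × V) →ₗ[F] (V × V) :=
    (LinearMap.fst F V V + (v : F) • LinearMap.snd F V V).prod
      (LinearMap.fst F V V + (u : F) • LinearMap.snd F V V)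
  have hf : Function.Injective f := by
    rw [← LinearMap.ker_eq_bot, LinearMap.ker_eq_bot']
    rintro ⟨p, r⟩ hpr
    have h1 : p + (v : F) • r = 0 := congrArg Prod.fst hpr
    have h3 : p + (u : F) • r = 0 := congrArg Prod.snd hpr
    have h4 : (t : F) • r = 0 := by
      have : (t : F) = u - v := by rw [h]; linear_combination (v : F) * h2
      rw [this, sub_smul]
      have := congrArg₂ (· - ·) h3 h1
      simpa using this
    have hr : r = 0 := (smul_eq_zero.mp h4).resolve_left t.ne_zero
    subst hr
    simpa using h1
  refine cls_congr (LinearEquiv.ofInjectiveEndo f hf) ?_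
  rintro ⟨p, r⟩
  simp [f, h]
  linear_combination (u * v * β p r + u * v * β r p : F) * h2

end Witt

/-! ### Binary forms and splitting off planes -/

section Forms

variable {F : Type} [Field F]
variable {V U U₁ U₂ : Type} [AddCommGroup V] [Module F V] [AddCommGroup U] [Module F U]
  [AddCommGroup U₁] [Module F U₁] [AddCommGroup U₂] [Module F U₂]

/-- The tensor product of a symmetric bilinear form `b` with the binary quadratic form `[1,d]`,
i.e. `(u, v) ↦ b(u,u) + b(u,v) + d b(v,v)`. -/
def twN (b : U →ₗ[F] U →ₗ[F] F) (d : F) : (U × U) →ₗ[F] (U × U) →ₗ[F] F :=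
  b.compl₁₂ (LinearMap.fst F U U) (LinearMap.fst F U U) +
    b.compl₁₂ (LinearMap.fst F U U) (LinearMap.snd F U U) +
    d • b.compl₁₂ (LinearMap.snd F U U) (LinearMap.snd F U U)

@[simp] lemma twN_apply (b : U →ₗ[F] U →ₗ[F] F) (d : F) (x y : U × U) :
    twN b d x y = b x.1 y.1 + b x.1 y.2 + d * b x.2 y.2 := by simp [twN]

/-- The binary quadratic form `c x² + x y + d y²`. -/
def binForm (c d : F) : (F × F) →ₗ[F] (F × F) →ₗ[F] F :=
  LinearMap.mk₂ F (fun p q => c * p.1 * q.1 + p.1 * q.2 + d * p.2 * q.2)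
    (by intros; simp; ring) (by intros; simp; ring) (by intros; simp; ring) (by intros; simp; ring)

@[simp] lemma binForm_apply (c d : F) (p q : F × F) :
    binForm c d p q = c * p.1 * q.1 + p.1 * q.2 + d * p.2 * q.2 := rfl

variable [CharP F 2]

lemma nd_twN {b : U →ₗ[F] U →ₗ[F] F} (hs : ∀ x y, b x y = b y x)
    (hn : ∀ x, (∀ y, b x y = 0) → x = 0) (d : F) : ND (twN b d) := by
  have h2 : (2 : F) = 0 := CharTwo.two_eq_zero
  rintro ⟨u, v⟩ h
  refine Prod.ext (hn _ fun y => ?_) (hn _ fun y => ?_)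
  · have := h (0, y)
    simp [hs y v] at this
    linear_combination this - d * b v y * h2
  · have := h (y, 0)
    simp [hs y u, hs y v] at this
    linear_combination this - b u y * h2

lemma nd_binForm (c d : F) : ND (binForm c d) := by
  have h2 : (2 : F) = 0 := CharTwo.two_eq_zero
  rintro ⟨u, v⟩ h
  have h0 := h (0, 1)
  have h1 := h (1, 0)
  simp at h0 h1
  refine Prod.ext ?_ ?_
  · simp; linear_combination h0 - d * v * h2
  · simp; linear_combination h1 - c * u * h2

lemma mul_symm (x y : F) : LinearMap.mul F F x y = LinearMap.mul F F y x := by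
  simp [mul_comm]

lemma mul_nd (x : F) (h : ∀ y, LinearMap.mul F F x y = 0) : x = 0 := by simpa using h 1

/-- The Witt class of the binary form `[1,d]`. -/
def nb (d : F) : WG F := cls (twN (LinearMap.mul F F) d) (nd_twN mul_symm mul_nd d)

lemma nb_add (c d : F) : nb (c + d) = nb c + nb d := by
  have h2 : (2 : F) = 0 := CharTwo.two_eq_zero
  unfold nb
  rw [cls_add, cls_eq_iff]
  let f : (F × F × F) →ₗ[F] ((F × F) × ((F × F) × (F × F))) :=
    { toFun := fun x => ((x.1 + x.2.1, x.2.2), ((x.1, x.2.2), (x.2.1, x.2.2)))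
      map_add' := fun x y => by ext <;> simp <;> ring
      map_smul' := fun r x => by ext <;> simp <;> ring }
  refine ⟨LinearMap.range f, ?_, ?_⟩
  · rintro _ ⟨x, rfl⟩
    simp [f]
    linear_combination (x.1 ^ 2 + x.1 * x.2.1 + x.2.1 ^ 2 + x.1 * x.2.2 + x.2.1 * x.2.2 + (c + d) * x.2.2 ^ 2) * h2
  · rw [LinearMap.finrank_range_of_inj]
    · simp
    · rintro ⟨x, y, z⟩ ⟨x', y', z'⟩ h
      simp [f] at h
      simp [h]

lemma nb_wp (z : F) : nb (z ^ 2 + z) = 0 := by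
  have h2 : (2 : F) = 0 := CharTwo.two_eq_zero
  unfold nb
  rw [cls_eq_zero_iff]
  let f : F →ₗ[F] (F × F) :=
    { toFun := fun x => (z * x, x)
      map_add' := fun x y => by ext <;> simp <;> ring
      map_smul' := fun r x => by ext <;> simp <;> ring }
  refine ⟨LinearMap.range f, ?_, ?_⟩
  · rintro _ ⟨x, rfl⟩
    simp [f]
    linear_combination (z ^ 2 * x ^ 2 + z * x ^ 2) * h2
  · rw [LinearMap.finrank_range_of_inj]
    · simp
    · intro x y h
      simp [f] at h
      simp [h]

lemma smul_nb_self (b : Fˣ) : b • nb (b : F) = nb (b : F) := by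
  have h2 : (2 : F) = 0 := CharTwo.two_eq_zero
  unfold nb
  rw [smul_cls, cls_eq_iff]
  let f : (F × F) →ₗ[F] ((F × F) × (F × F)) :=
    { toFun := fun x => ((x.1, x.2), (b * x.2, x.1))
      map_add' := fun x y => by ext <;> simp <;> ring
      map_smul' := fun r x => by ext <;> simp <;> ring }
  refine ⟨LinearMap.range f, ?_, ?_⟩
  · rintro _ ⟨x, rfl⟩
    simp [f]
    linear_combination (b * x.1 ^ 2 + b * x.1 * x.2 + b ^ 2 * x.2 ^ 2 : F) * h2
  · rw [LinearMap.finrank_range_of_inj]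
    · simp
    · rintro ⟨x, y⟩ ⟨x', y'⟩ h
      simp [f] at h
      simp [h]

lemma cls_binForm (c : Fˣ) (d : F) : cls (binForm (c : F) d) (nd_binForm _ _) = c • nb (c * d) := by
  unfold nb
  rw [smul_cls]
  symm
  refine cls_congr ((LinearEquiv.refl F F).prodCongr (LinearEquiv.smulOfUnit c)) ?_
  rintro ⟨x, y⟩
  simp [LinearEquiv.smulOfUnit, Units.smul_def]
  ring

lemma hasLag_binForm_zero (d : F) : HasLag (binForm 0 d) := by
  refine ⟨LinearMap.range (LinearMap.inl F F F), ?_, ?_⟩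
  · rintro _ ⟨x, rfl⟩
    simp
  · rw [LinearMap.finrank_range_of_inj LinearMap.inl_injective]
    simp

/-- A pair `v, w` with polar value `1` splits off the plane it spans. -/
lemma split_plane [FiniteDimensional F V] {β : V →ₗ[F] V →ₗ[F] F} (hβ : ND β) {v w : V}
    (hvw : β v w + β w v = 1) :
    ∃ (U : Submodule F V) (_ : ND (β.domRestrict₁₂ U U)) (e : (U × (F × F)) ≃ₗ[F] V),
      ∀ x, β (e x) (e x) = osum (β.domRestrict₁₂ U U) (binForm (β v v) (β w w)) x x := by
  have h2 : (2 : F) = 0 := CharTwo.two_eq_zero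
  have hn : ∀ x : V, x + x = 0 := fun x => by
    rw [← two_smul F x, h2, zero_smul]
  let B : V →ₗ[F] V →ₗ[F] F := β + β.flip
  have hB : ∀ x y, B x y = β x y + β y x := fun x y => by simp [B]
  let U : Submodule F V := LinearMap.ker (B v) ⊓ LinearMap.ker (B w)
  let g : V →ₗ[F] V := LinearMap.id + (B w).smulRight v + (B v).smulRight w
  have hg : ∀ z, g z = z + B w z • v + B v z • w := fun z => by simp [g]
  have hgU : ∀ z, g z ∈ U := by
    intro z
    refine ⟨?_, ?_⟩
    · show B v (g z) = 0
      rw [hg]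
      simp only [map_add, map_smul, LinearMap.add_apply, LinearMap.smul_apply, smul_eq_mul, hB]
      linear_combination (β v z + β z v) * hvw + (β v v * (β w z + β z w) + β v z + β z v) * h2
    · show B w (g z) = 0
      rw [hg]
      simp only [map_add, map_smul, LinearMap.add_apply, LinearMap.smul_apply, smul_eq_mul, hB]
      linear_combination (β w z + β z w) * hvw + (β w w * (β v z + β z v) + β w z + β z w) * h2
  let e : (U × (F × F)) ≃ₗ[F] V :=
    { toFun := fun x => (x.1 : V) + x.2.1 • v + x.2.2 • w
      map_add' := fun x y => by simp; module
      map_smul' := fun r x => by simp; module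
      invFun := fun z => (⟨g z, hgU z⟩, (B w z, B v z))
      left_inv := by
        rintro ⟨⟨u, hu1, hu2⟩, x, y⟩
        replace hu1 : B v u = 0 := hu1
        replace hu2 : B w u = 0 := hu2
        rw [hB] at hu1 hu2
        have e1 : B w (u + x • v + y • w) = x := by
          simp only [map_add, map_smul, LinearMap.add_apply, LinearMap.smul_apply, smul_eq_mul, hB]
          linear_combination hu2 + x * hvw + y * β w w * h2
        have e2 : B v (u + x • v + y • w) = y := by
          simp only [map_add, map_smul, LinearMap.add_apply, LinearMap.smul_apply, smul_eq_mul, hB]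
          linear_combination hu1 + y * hvw + x * β v v * h2
        refine Prod.ext (Subtype.ext ?_) (Prod.ext e1 e2)
        simp only [hg, e1, e2]
        calc _ = u + (x • v + x • v) + (y • w + y • w) := by module
          _ = u := by simp [hn]
      right_inv := by
        intro z
        simp only [hg]
        calc _ = z + (B w z • v + B w z • v) + (B v z • w + B v z • w) := by module
          _ = z := by simp [hn] }
  have he : ∀ x, e x = (x.1 : V) + x.2.1 • v + x.2.2 • w := fun x => rfl
  refine ⟨U, ?_, e, ?_⟩
  · intro u hu
    apply Subtype.ext
    refine hβ _ fun y => ?_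
    obtain ⟨⟨u', x⟩, rfl⟩ := e.surjective y
    have h0 := hu u'
    have h1 : B v u = 0 := u.2.1
    have h3 : B w u = 0 := u.2.2
    rw [hB] at h1 h3
    simp only [LinearMap.domRestrict₁₂_apply] at h0
    simp only [he, map_add, map_smul, LinearMap.add_apply, LinearMap.smul_apply, smul_eq_mul]
    linear_combination h0 + x.1 * h1 + x.2 * h3
  · rintro ⟨⟨u, hu1, hu2⟩, x, y⟩
    replace hu1 : B v u = 0 := hu1
    replace hu2 : B w u = 0 := hu2
    rw [hB] at hu1 hu2
    simp only [he, map_add, map_smul, LinearMap.add_apply, LinearMap.smul_apply, smul_eq_mul,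
      osum_apply, LinearMap.domRestrict₁₂_apply, binForm_apply]
    linear_combination x * hu1 + y * hu2 + x * y * hvw

lemma exists_polar_one {β : V →ₗ[F] V →ₗ[F] F} (hβ : ND β) {v : V} (hv : v ≠ 0) :
    ∃ w, β v w + β w v = 1 := by
  by_contra hcon
  apply hv
  refine hβ v fun y => ?_
  by_contra hy
  refine hcon ⟨(β v y + β y v)⁻¹ • y, ?_⟩
  simp only [map_smul, LinearMap.smul_apply, smul_eq_mul, ← mul_add]
  exact inv_mul_cancel₀ hy

/-- The Witt group is generated by the scaled binary forms `c[1,d]`. -/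
lemma closure_nb : AddSubgroup.closure {w : WG F | ∃ (c : Fˣ) (d : F), w = c • nb d} = ⊤ := by
  rw [eq_top_iff]
  rintro w -
  induction w using WG.ind with | h V β hβ => ?_
  induction hn : finrank F V using Nat.strong_induction_on generalizing V with | _ n ih => ?_
  by_cases hV : ∃ v : V, v ≠ 0
  · obtain ⟨v, hv⟩ := hV
    obtain ⟨w, hvw⟩ := exists_polar_one hβ hv
    obtain ⟨U, hU, e, he⟩ := split_plane hβ hvw
    have h1 : cls β hβ = cls _ hU + cls _ (nd_binForm (β v v) (β w w)) := by
      rw [cls_add]; symm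
      exact cls_congr e he
    rw [h1]
    have hd := e.finrank_eq
    simp at hd
    refine add_mem (ih _ (by omega) _ _ hU rfl) ?_
    by_cases hc : β v v = 0
    · have : cls _ (nd_binForm (β v v) (β w w)) = 0 := by
        rw [cls_eq_zero_iff, hc]; exact hasLag_binForm_zero _
      rw [this]; exact zero_mem _
    · exact AddSubgroup.subset_closure ⟨Units.mk0 _ hc, _, cls_binForm (Units.mk0 _ hc) _⟩
  · push Not at hV
    have : cls β hβ = 0 := by
      rw [cls_eq_zero_iff]
      refine ⟨⊤, fun w _ => by simp [hV w], by simp; omega⟩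
    rw [this]; exact zero_mem _

/-- Every Witt class is represented by an anisotropic form of no larger dimension. -/
lemma exists_aniso [FiniteDimensional F V] {β : V →ₗ[F] V →ₗ[F] F} (hβ : ND β) :
    ∃ (n : ℕ) (A : (Fin n → F) →ₗ[F] (Fin n → F) →ₗ[F] F) (hA : ND A), n ≤ finrank F V ∧
      cls β hβ = cls A hA ∧ ∀ x, A x x = 0 → x = 0 := by
  induction hn : finrank F V using Nat.strong_induction_on generalizing V with | _ n ih => ?_
  by_cases hV : ∃ v : V, v ≠ 0 ∧ β v v = 0
  · obtain ⟨v, hv, hv0⟩ := hV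
    obtain ⟨w, hvw⟩ := exists_polar_one hβ hv
    obtain ⟨U, hU, e, he⟩ := split_plane hβ hvw
    have h1 : cls β hβ = cls _ hU + cls _ (nd_binForm (β v v) (β w w)) := by
      rw [cls_add]; symm
      exact cls_congr e he
    have : cls _ (nd_binForm (β v v) (β w w)) = 0 := by
        rw [cls_eq_zero_iff, hv0]; exact hasLag_binForm_zero _
    rw [this, add_zero] at h1
    have hd := e.finrank_eq
    simp at hd
    obtain ⟨m, A, hA, hm, hc, ha⟩ := ih _ (by omega) hU rfl
    exact ⟨m, A, hA, by omega, h1.trans hc, ha⟩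
  · push Not at hV
    let e : V ≃ₗ[F] (Fin n → F) := LinearEquiv.ofFinrankEq _ _ (by simp [hn])
    have he : ∀ x, (β.compl₁₂ e.symm.toLinearMap e.symm.toLinearMap) (e x) (e x) = β x x := by
      intro x; simp
    refine ⟨n, β.compl₁₂ e.symm.toLinearMap e.symm.toLinearMap, hβ.of_equiv e he, by omega,
      cls_congr e he, ?_⟩
    intro x hx
    by_contra h0
    exact hV (e.symm x) (by simpa using h0) (by simpa using hx)

/-- A nonsingular form with a Lagrangian is an orthogonal sum of hyperbolic planes. -/
lemma HasLag.exists_hyperbolic (n : ℕ) : ∀ (V : Type) [AddCommGroup V] [Module F V]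
    [FiniteDimensional F V] (β : V →ₗ[F] V →ₗ[F] F) (_ : ND β) (_ : HasLag β)
    (_ : finrank F V = 2 * n),
    ∃ e : V ≃ₗ[F] (Fin n → Fin 2 → F), ∀ v, β v v = ∑ i, e v i 0 * e v i 1 := by
  induction n with
  | zero =>
    intro V _ _ _ β hβ hl hn
    let e : V ≃ₗ[F] (Fin 0 → Fin 2 → F) :=
      LinearEquiv.ofFinrankEq _ _ (by rw [hn, finrank_zero_of_subsingleton])
    refine ⟨e, fun v => ?_⟩
    have : v = 0 := e.injective (Subsingleton.elim _ _)
    simp [this]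
  | succ n ih =>
    intro V _ _ _ β hβ hl hn
    have h2 : (2 : F) = 0 := CharTwo.two_eq_zero
    obtain ⟨W, hW, hd⟩ := id hl
    obtain ⟨v, hvW, hv⟩ : ∃ v ∈ W, v ≠ 0 := by
      apply Submodule.exists_mem_ne_zero_of_ne_bot
      rintro rfl
      simp at hd
      omega
    obtain ⟨w', hvw'⟩ := exists_polar_one hβ hv
    have hv0 := hW v hvW
    let w := w' + β w' w' • v
    have hvw : β v w + β w v = 1 := by
      simp only [w, map_add, map_smul, LinearMap.add_apply, LinearMap.smul_apply, smul_eq_mul, hv0]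
      linear_combination hvw'
    have hw0 : β w w = 0 := by
      simp only [w, map_add, map_smul, LinearMap.add_apply, LinearMap.smul_apply, smul_eq_mul, hv0]
      linear_combination β w' w' * hvw' + β w' w' * h2
    obtain ⟨U, hU, e, he⟩ := split_plane hβ hvw
    have hd' := e.finrank_eq
    simp at hd'
    have h1 : cls β hβ = cls _ hU + cls _ (nd_binForm (β v v) (β w w)) := by
      rw [cls_add]; symm
      exact cls_congr e he
    have h3 : cls _ (nd_binForm (β v v) (β w w)) = 0 := by
      rw [cls_eq_zero_iff, hv0]; exact hasLag_binForm_zero _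
    rw [cls_eq_zero_iff.2 hl, h3, add_zero] at h1
    obtain ⟨f, hf⟩ := ih U _ hU (cls_eq_zero_iff.1 h1.symm) (by omega)
    let g : (U × (F × F)) ≃ₗ[F] (Fin (n + 1) → Fin 2 → F) :=
      ((f.prodCongr (LinearEquiv.finTwoArrow F F).symm).trans (LinearEquiv.prodComm F _ _)).trans
        (Fin.consLinearEquiv F (fun _ : Fin (n + 1) => Fin 2 → F))
    refine ⟨e.symm.trans g, fun z => ?_⟩
    obtain ⟨⟨u, x, y⟩, rfl⟩ := e.surjective z
    rw [he, Fin.sum_univ_succ]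
    simp [g, hv0, hw0, add_comm]
    exact hf u

end Forms

/-! ### Pfister multiples, the subgroups `I²` and `I⁴`, diagonalisation of bilinear forms -/

section Pfister

variable {F : Type} [Field F] [CharP F 2]

/-- Multiplication of Witt classes by the binary bilinear Pfister form `⟨1, x⟩`. -/
def P (x : Fˣ) : WG F →+ WG F :=
  AddMonoidHom.id _ + DistribSMul.toAddMonoidHom (WG F) x

lemma P_apply (x : Fˣ) (w : WG F) : P x w = w + x • w := rfl

lemma P_smul (x c : Fˣ) (w : WG F) : P x (c • w) = c • P x w := by
  simp only [P_apply, smul_add, smul_smul, mul_comm]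

lemma P_comm (x y : Fˣ) (w : WG F) : P x (P y w) = P y (P x w) := by
  simp only [P_apply, smul_add, smul_smul, mul_comm x y]
  abel

lemma P_mul (x y : Fˣ) (w : WG F) : P (x * y) w = P x w + x • P y w := by
  simp only [P_apply, smul_add, smul_smul]
  linear_combination (norm := abel) -WG.add_self (x • w)

lemma P_P_self (x : Fˣ) (w : WG F) : P x (P x w) = 0 := by
  simp only [P_apply, smul_add, smul_smul, sq_smul]
  linear_combination (norm := abel) WG.add_self w + WG.add_self (x • w)

lemma P_P_of_add_eq_one (u v : Fˣ) (h : (u : F) + v = 1) (w : WG F) : P u (P v w) = 0 := by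
  have := add_smul_rel u v 1 (by simp [h]) w
  simp only [mul_one, one_smul] at this
  simp only [P_apply, smul_add, smul_smul]
  linear_combination (norm := abel) this + WG.add_self (w + (u * v) • w)

lemma P_one (w : WG F) : P 1 w = 0 := by simp [P_apply, WG.add_self]

lemma P_inv (x : Fˣ) (w : WG F) : P x⁻¹ w = P x w := by
  rw [P_apply, P_apply]
  congr 1
  rw [← sq_smul x (x⁻¹ • w), smul_smul]
  simp

/-- The subgroup of the Witt group generated by the multiples of two-fold quadratic Pfister forms
`⟨1, z⟩ ⊗ [1, b]`. -/
def I2 (F : Type) [Field F] [CharP F 2] : AddSubgroup (WG F) :=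
  AddSubgroup.closure {w | ∃ (c z : Fˣ) (b : F), w = c • P z (nb b)}

/-- The subgroup of the Witt group generated by the multiples of four-fold quadratic Pfister
forms `⟨1, x⟩ ⊗ ⟨1, y⟩ ⊗ ⟨1, z⟩ ⊗ [1, b]`. -/
def I4 (F : Type) [Field F] [CharP F 2] : AddSubgroup (WG F) :=
  AddSubgroup.closure {w | ∃ (c x y z : Fˣ) (b : F), w = c • P x (P y (P z (nb b)))}

lemma P_mem_I2 (z : Fˣ) (w : WG F) : P z w ∈ I2 F := by
  have : (⊤ : AddSubgroup (WG F)) ≤ (I2 F).comap (P z) := by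
    rw [← closure_nb, AddSubgroup.closure_le]
    rintro _ ⟨c, d, rfl⟩
    exact AddSubgroup.subset_closure ⟨c, z, d, P_smul _ _ _⟩
  exact this trivial

lemma P_P_mem_I4 (x y : Fˣ) {w : WG F} (hw : w ∈ I2 F) : P x (P y w) ∈ I4 F := by
  have : I2 F ≤ (I4 F).comap ((P x).comp (P y)) := by
    rw [I2, AddSubgroup.closure_le]
    rintro _ ⟨c, z, d, rfl⟩
    refine AddSubgroup.subset_closure ⟨c, x, y, z, d, ?_⟩
    simp [P_smul]
  exact this hw

lemma smul_mem_I4 (c : Fˣ) {w : WG F} (hw : w ∈ I4 F) : c • w ∈ I4 F := by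
  have : I4 F ≤ (I4 F).comap (DistribSMul.toAddMonoidHom (WG F) c) := by
    nth_rw 1 [I4]
    rw [AddSubgroup.closure_le]
    rintro _ ⟨c', x, y, z, d, rfl⟩
    exact AddSubgroup.subset_closure ⟨c * c', x, y, z, d, smul_smul _ _ _⟩
  exact this hw

lemma nb_zero : nb (0 : F) = 0 := by simpa using nb_wp (0 : F)

/-- Modulo the classes `⟨1, x⟩ ⊗ ⟨1, y⟩ ⊗ w`, the map `c ↦ ⟨1, c⟩ ⊗ w` turns products into sums. -/
lemma list_sum_sub_mem (J : AddSubgroup (WG F)) (w : WG F) (hJ : ∀ x y : Fˣ, P x (P y w) ∈ J)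
    (L : List Fˣ) : (L.map fun c => P c w).sum + P L.prod w ∈ J := by
  induction L with
  | nil => simp [P_one]
  | cons c L ih =>
    simp only [List.map_cons, List.sum_cons, List.prod_cons, P_mul]
    have h1 := hJ c L.prod
    have : P c w + (L.map fun c => P c w).sum + (P c w + c • P L.prod w)
        = ((L.map fun c => P c w).sum + P L.prod w) + P c (P L.prod w) := by
      rw [P_apply c (P L.prod w)]
      linear_combination (norm := abel) WG.add_self (P c w) - WG.add_self (P L.prod w)
    rw [this]
    exact add_mem ih h1

lemma list_sum_P (w : WG F) (L : List Fˣ) :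
    (L.map fun c => P c w).sum = L.length • w + (L.map fun c => c • w).sum := by
  induction L with
  | nil => simp
  | cons c L ih =>
    rw [List.map_cons, List.sum_cons, ih]
    simp only [List.map_cons, List.sum_cons, List.length_cons, P_apply, add_smul, one_smul]
    abel

lemma nsmul_even {n : ℕ} (h : Even n) (w : WG F) : n • w = 0 := by
  obtain ⟨m, rfl⟩ := h
  rw [add_smul, WG.add_self]

lemma nsmul_odd {n : ℕ} (h : Odd n) (w : WG F) : n • w = w := by
  obtain ⟨m, rfl⟩ := h
  rw [add_smul, nsmul_even (by simp), zero_add, one_smul]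

/-- An odd-dimensional bilinear form `⟨c₁, …, cₙ⟩` acts on `w` like its determinant `c₁ ⋯ cₙ`, modulo
the classes `⟨1, x⟩ ⊗ ⟨1, y⟩ ⊗ w`. -/
lemma list_sum_odd (J : AddSubgroup (WG F)) (w : WG F) (hJ : ∀ x y : Fˣ, P x (P y w) ∈ J)
    (L : List Fˣ) (hL : Odd L.length) : (L.map fun c => c • w).sum + L.prod • w ∈ J := by
  have := list_sum_sub_mem J w hJ L
  rw [list_sum_P, nsmul_odd hL, P_apply] at this
  convert this using 1
  linear_combination (norm := abel) -WG.add_self w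

lemma list_sum_even_mem_I2 (w : WG F) (L : List Fˣ) (hL : Even L.length) :
    (L.map fun c => c • w).sum ∈ I2 F := by
  have := list_sum_P w L
  rw [nsmul_even hL, zero_add] at this
  rw [← this]
  refine AddSubgroup.list_sum_mem _ ?_
  simp only [List.mem_map]
  rintro _ ⟨c, -, rfl⟩
  exact P_mem_I2 c w

section Bilinear

variable {U U₁ U₂ : Type} [AddCommGroup U] [Module F U]
  [AddCommGroup U₁] [Module F U₁] [AddCommGroup U₂] [Module F U₂]

/-- Diagonalisation of symmetric bilinear forms up to metabolic summands, which become hyperbolic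
after tensoring with `[1,d]`. -/
lemma exists_diag [FiniteDimensional F U] (b : U →ₗ[F] U →ₗ[F] F) (hs : ∀ x y, b x y = b y x)
    (hn : ∀ x, (∀ y, b x y = 0) → x = 0) :
    ∃ L : List Fˣ, L.length % 2 = finrank F U % 2 ∧
      ∀ d, cls (twN b d) (nd_twN hs hn d) = (L.map fun c => c • nb d).sum := by
  have h2 : (2 : F) = 0 := CharTwo.two_eq_zero
  induction hN : finrank F U using Nat.strong_induction_on generalizing U with | _ n ih => ?_
  by_cases hx : ∃ x, b x x ≠ 0
  · obtain ⟨x, hx⟩ := hx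
    let p : Submodule F U := LinearMap.ker (b x)
    let e : (p × F) ≃ₗ[F] U :=
      { toFun := fun z => (z.1 : U) + z.2 • x
        map_add' := fun z y => by simp; module
        map_smul' := fun r z => by simp; module
        invFun := fun u => (⟨u - (b x u / b x x) • x, by
          show b x _ = 0
          simp [hx]⟩, b x u / b x x)
        left_inv := by
          rintro ⟨⟨u, hu⟩, r⟩
          replace hu : b x u = 0 := hu
          have : b x (u + r • x) / b x x = r := by simp [hu, hx]
          refine Prod.ext (Subtype.ext ?_) this
          simp only [this]; module
        right_inv := by intro u; simp }
    have he : ∀ z, e z = (z.1 : U) + z.2 • x := fun z => rfl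
    have hr : ∀ y z : p, b.domRestrict₁₂ p p y z = b y z := fun _ _ => rfl
    have hs' : ∀ y z, b.domRestrict₁₂ p p y z = b.domRestrict₁₂ p p z y := fun y z => hs _ _
    have hn' : ∀ y, (∀ z, b.domRestrict₁₂ p p y z = 0) → y = 0 := by
      intro y hy
      apply Subtype.ext
      refine hn _ fun u => ?_
      obtain ⟨⟨z, r⟩, rfl⟩ := e.surjective u
      have h1 : b x y = 0 := y.2
      have h3 : b y z = 0 := hy z
      simp [he, h3, hs y x, h1]
    have hd := e.finrank_eq
    simp at hd
    obtain ⟨L, hL, hL'⟩ := ih _ (by omega) _ hs' hn' rfl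
    refine ⟨Units.mk0 _ hx :: L, by simp; omega, fun d => ?_⟩
    rw [List.map_cons, List.sum_cons, ← hL', nb, smul_cls, cls_add]
    symm
    refine cls_congr ((LinearEquiv.prodProdProdComm F F F p p).trans
      (((LinearEquiv.prodComm F F p).trans e).prodCongr ((LinearEquiv.prodComm F F p).trans e))) ?_
    rintro ⟨⟨r, r'⟩, ⟨u, hu⟩, ⟨u', hu'⟩⟩
    replace hu : b x u = 0 := hu
    replace hu' : b x u' = 0 := hu'
    have q1 : b u x = 0 := by rw [hs, hu]
    have q2 : b u' x = 0 := by rw [hs, hu']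
    simp [he, hr, hu, hu', q1, q2]
    ring
  · push Not at hx
    by_cases hU : ∃ x : U, x ≠ 0
    · obtain ⟨x, hx0⟩ := hU
      obtain ⟨y, hxy⟩ : ∃ y, b x y = 1 := by
        by_contra hcon
        refine hx0 (hn x fun y => ?_)
        by_contra hy
        exact hcon ⟨(b x y)⁻¹ • y, by simp [hy]⟩
      have hyx : b y x = 1 := by rw [hs, hxy]
      let p : Submodule F U := LinearMap.ker (b x) ⊓ LinearMap.ker (b y)
      let e : (p × (F × F)) ≃ₗ[F] U :=
        { toFun := fun z => (z.1 : U) + z.2.1 • x + z.2.2 • y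
          map_add' := fun z y => by simp; module
          map_smul' := fun r z => by simp; module
          invFun := fun u => (⟨u - b y u • x - b x u • y, by
            show b x _ = 0
            simp [hx, hxy], by
            show b y _ = 0
            simp [hx, hyx]⟩, (b y u, b x u))
          left_inv := by
            rintro ⟨⟨u, hu, hu'⟩, r, t⟩
            replace hu : b x u = 0 := hu
            replace hu' : b y u = 0 := hu'
            have e1 : b x (u + r • x + t • y) = t := by simp [hu, hx, hxy]
            have e2 : b y (u + r • x + t • y) = r := by simp [hu', hx, hyx]
            refine Prod.ext (Subtype.ext ?_) (Prod.ext e2 e1)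
            simp only [e1, e2]; module
          right_inv := by intro u; simp only; module }
      have he : ∀ z, e z = (z.1 : U) + z.2.1 • x + z.2.2 • y := fun z => rfl
      have hr : ∀ y z : p, b.domRestrict₁₂ p p y z = b y z := fun _ _ => rfl
      have hs' : ∀ y z, b.domRestrict₁₂ p p y z = b.domRestrict₁₂ p p z y := fun y z => hs _ _
      have hn' : ∀ y, (∀ z, b.domRestrict₁₂ p p y z = 0) → y = 0 := by
        intro v hv
        apply Subtype.ext
        refine hn _ fun u => ?_
        obtain ⟨⟨z, r⟩, rfl⟩ := e.surjective u
        have h1 : b x v = 0 := v.2.1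
        have h1' : b y v = 0 := v.2.2
        have h3 : b v z = 0 := hv z
        simp [he, h3, hs v x, hs v y, h1, h1']
      have hd := e.finrank_eq
      simp at hd
      obtain ⟨L, hL, hL'⟩ := ih _ (by omega) _ hs' hn' rfl
      refine ⟨L, by omega, fun d => ?_⟩
      rw [← hL', cls_eq_iff]
      -- the diagonal copy of `p` together with `x ⊗ [1,d]`
      let f : ((p × p) × (F × F)) →ₗ[F] ((U × U) × (p × p)) :=
        { toFun := fun z => ((z.1.1 + z.2.1 • x, z.1.2 + z.2.2 • x), z.1)
          map_add' := fun z y => by ext <;> simp <;> module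
          map_smul' := fun r z => by ext <;> simp <;> module }
      refine ⟨LinearMap.range f, ?_, ?_⟩
      · rintro _ ⟨⟨⟨⟨u, hu⟩, ⟨u', hu'⟩⟩, r, r'⟩, rfl⟩
        have q1 : b x u = 0 := hu.1
        have q2 : b x u' = 0 := hu'.1
        have q3 : b u x = 0 := by rw [hs, q1]
        have q4 : b u' x = 0 := by rw [hs, q2]
        simp [f, hr, hx, q1, q2, q3, q4]
        linear_combination (b u u') * h2
      · rw [LinearMap.finrank_range_of_inj]
        · simp; omega
        · rintro ⟨z, r, r'⟩ ⟨w, t, t'⟩ h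
          simp [f] at h
          obtain ⟨⟨h1, h3⟩, rfl⟩ := h
          simp at h1 h3
          have h4 : r = t := smul_left_injective F hx0 h1
          have h5 : r' = t' := smul_left_injective F hx0 h3
          rw [h4, h5]
    · push Not at hU
      have : finrank F U = 0 := by
        have : Subsingleton U := ⟨fun x y => by rw [hU x, hU y]⟩
        exact finrank_zero_of_subsingleton
      refine ⟨[], by simp; omega, fun d => ?_⟩
      simp only [List.map_nil, List.sum_nil]
      rw [cls_eq_zero_iff]
      exact ⟨⊤, fun w _ => by simp [hU w.1, hU w.2], by simp [this]⟩

end Bilinear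

end Pfister

/-! ### Transfer along a quadratic extension -/

section Transfer

variable {F K : Type} [Field F] [Field K] [Algebra F K]
variable {V V₁ V₂ : Type} [AddCommGroup V] [Module F V] [Module K V] [IsScalarTower F K V]
  [AddCommGroup V₁] [Module F V₁] [Module K V₁] [IsScalarTower F K V₁]
  [AddCommGroup V₂] [Module F V₂] [Module K V₂] [IsScalarTower F K V₂]

/-- The transfer `s ∘ β` of a form along an `F`-linear map `s : K → F`. -/
def trForm (s : K →ₗ[F] F) (β : V →ₗ[K] V →ₗ[K] K) : V →ₗ[F] V →ₗ[F] F :=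
  LinearMap.mk₂ F (fun x y => s (β x y)) (by intros; simp)
    (by
      intro c m n
      rw [← algebraMap_smul K c m, map_smul, LinearMap.smul_apply, algebraMap_smul, map_smul])
    (by intros; simp)
    (by
      intro c m n
      rw [← algebraMap_smul K c n, map_smul, algebraMap_smul, map_smul])

@[simp] lemma trForm_apply (s : K →ₗ[F] F) (β : V →ₗ[K] V →ₗ[K] K) (x y : V) :
    trForm s β x y = s (β x y) := rfl

lemma ND.trForm {s : K →ₗ[F] F} (hs : s ≠ 0) {β : V →ₗ[K] V →ₗ[K] K} (h : ND β) :
    ND (trForm s β) := by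
  intro x hx
  refine h x fun y => ?_
  by_contra hy
  apply hs
  ext k
  have := hx ((k / (β x y + β y x)) • y)
  simp only [trForm_apply, map_smul, LinearMap.smul_apply, smul_eq_mul, ← map_add, ← mul_add] at this
  rwa [div_mul_cancel₀ _ hy] at this

lemma HasLag.trForm [FiniteDimensional F K] (s : K →ₗ[F] F) {β : V →ₗ[K] V →ₗ[K] K}
    (h : HasLag β) : HasLag (trForm s β) := by
  obtain ⟨W, hW, hd⟩ := h
  refine ⟨W.restrictScalars F, fun w hw => by simp [hW w hw], ?_⟩
  have h1 := Module.finrank_mul_finrank F K V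
  have h2 : finrank F K * finrank K W = finrank F (W.restrictScalars F) :=
    Module.finrank_mul_finrank F K W
  rw [← h1, ← h2]
  nlinarith [Nat.zero_le (finrank F K)]

/-- A copy of the `K`-space `W`, carrying both the `K`-structure and its restriction to `F`. -/
def RS (_F _K W : Type) : Type := W

section RS

variable {W : Type} [AddCommGroup W] [Module K W]

instance : AddCommGroup (RS F K W) := inferInstanceAs (AddCommGroup W)

instance : Module K (RS F K W) := inferInstanceAs (Module K W)

instance : Module F (RS F K W) := Module.compHom (RS F K W) (algebraMap F K)

instance : IsScalarTower F K (RS F K W) := IsScalarTower.of_compHom F K (RS F K W)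

instance [FiniteDimensional K W] : FiniteDimensional K (RS F K W) :=
  inferInstanceAs (FiniteDimensional K W)

instance [FiniteDimensional F K] [FiniteDimensional K W] : FiniteDimensional F (RS F K W) :=
  Module.Finite.trans K _

end RS

/-- A form regarded on the restriction of scalars of its space. -/
def rsForm (F : Type) [Field F] [Algebra F K] {W : Type} [AddCommGroup W] [Module K W]
    (β : W →ₗ[K] W →ₗ[K] K) :
    RS F K W →ₗ[K] RS F K W →ₗ[K] K := β

variable [CharP F 2] [CharP K 2] [FiniteDimensional F K]

/-- The transfer homomorphism between Witt groups. -/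
def tr (s : K →ₗ[F] F) (hs : s ≠ 0) : WG K →+ WG F where
  toFun := Quotient.lift (fun A : NSF K => cls (trForm s (rsForm F A.β))
      (ND.trForm (V := RS F K A.V) hs A.nd)) (by
    intro A B h
    rw [cls_eq_iff]
    have h' : HasLag (AlbertDescent.osum (rsForm F A.β) (rsForm F B.β)) := h
    refine (h'.trForm s).of_equiv (LinearEquiv.refl F _) fun x => ?_
    simp)
  map_zero' := by
    show cls _ _ = 0
    rw [cls_eq_zero_iff]
    refine ⟨⊤, fun w _ => ?_, ?_⟩
    · exact map_zero s
    · have : Subsingleton (RS F K PUnit) := inferInstanceAs (Subsingleton PUnit)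
      rw [finrank_zero_of_subsingleton]; simp
  map_add' := by
    intro a b
    induction a using WG.ind with | h V₁ β₁ h₁ => ?_
    induction b using WG.ind with | h V₂ β₂ h₂ => ?_
    rw [cls_add]
    show cls _ _ = cls _ _ + cls _ _
    rw [cls_add]
    let e : RS F K (V₁ × V₂) ≃ₗ[F]
      (RS F K V₁ × RS F K V₂) :=
      { toFun := fun x => x, invFun := fun x => x, left_inv := fun _ => rfl
        right_inv := fun _ => rfl, map_add' := fun _ _ => rfl, map_smul' := fun _ _ => rfl }
    refine cls_congr e fun x => ?_
    simp only [osum_apply, trForm_apply, ← map_add]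
    exact congrArg s (osum_apply β₁ β₂ _ _).symm

lemma tr_cls [FiniteDimensional F V] [FiniteDimensional K V] (s : K →ₗ[F] F) (hs : s ≠ 0) {β : V →ₗ[K] V →ₗ[K] K}
    (h : ND β) : tr s hs (cls β h) = cls (trForm s β) (h.trForm hs) := by
  show cls _ _ = cls _ _
  let e : RS F K V ≃ₗ[F] V :=
      { toFun := fun x => x, invFun := fun x => x, left_inv := fun _ => rfl
        right_inv := fun _ => rfl, map_add' := fun _ _ => rfl
        map_smul' := fun r x => algebraMap_smul (M := V) K r x }
  refine cls_congr e fun x => ?_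
  show s _ = s _
  rfl

lemma tr_smul (s : K →ₗ[F] F) (hs : s ≠ 0) (c : Fˣ) (w : WG K) :
    tr s hs (Units.map (algebraMap F K : F →* K) c • w) = c • tr s hs w := by
  induction w using WG.ind with | h V β hβ => ?_
  refine cls_congr (LinearEquiv.refl F _) fun x => ?_
  show (c : F) • s (rsForm F β x x) = s ((algebraMap F K c) * rsForm F β x x)
  rw [← Algebra.smul_def, map_smul]

/-- The inclusion of unit groups. -/
abbrev uu (K : Type) [Field K] [Algebra F K] (c : Fˣ) : Kˣ := Units.map (algebraMap F K : F →* K) c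

lemma tr_P (s : K →ₗ[F] F) (hs : s ≠ 0) (c : Fˣ) (w : WG K) :
    tr s hs (P (uu K c) w) = P c (tr s hs w) := by
  rw [P_apply, P_apply, map_add, tr_smul]

/-- The transfer of `c[1,g]` with `g ∈ F` is the tensor product of a binary bilinear form
with `[1,g]`. -/
lemma tr_nb_mem_I2 (s : K →ₗ[F] F) (hs : s ≠ 0) (h2 : finrank F K = 2) (c : Kˣ) (g : F) :
    tr s hs (c • nb (algebraMap F K g)) ∈ I2 F := by
  let b : K →ₗ[F] K →ₗ[F] F := trForm s ((c : K) • LinearMap.mul K K)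
  have hb : ∀ x y, b x y = s (c * (x * y)) := fun x y => by simp [b]
  have hsy : ∀ x y, b x y = b y x := fun x y => by simp [hb, mul_comm x]
  have hn : ∀ x, (∀ y, b x y = 0) → x = 0 := by
    intro x hx
    by_contra h0
    apply hs
    ext k
    have := hx ((c * x : K)⁻¹ * k)
    rw [hb] at this
    have h3 : (c : K) * (x * ((c * x : K)⁻¹ * k)) = k := by field_simp
    rw [h3] at this
    exact this
  obtain ⟨L, hL, hL'⟩ := exists_diag b hsy hn
  have : tr s hs (c • nb (algebraMap F K g)) = cls (twN b g) (nd_twN hsy hn g) := by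
    rw [nb, smul_cls, tr_cls]
    refine cls_congr (LinearEquiv.refl F _) fun x => ?_
    simp [hb, mul_add]
    have : (c : K) * (algebraMap F K g * (x.2 * x.2)) = g • (c * (x.2 * x.2) : K) := by
      rw [Algebra.smul_def]; ring
    rw [this, map_smul, smul_eq_mul]
  rw [this, hL']
  refine list_sum_even_mem_I2 _ _ ?_
  rw [h2] at hL
  exact Nat.even_iff.2 hL

lemma exists_lin_comb (h2 : finrank F K = 2) {x : K} (hx : x ∉ Set.range (algebraMap F K)) (y : K) :
    ∃ p q : F, y = algebraMap F K p + algebraMap F K q * x := by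
  have hli : LinearIndependent F ![(1 : K), x] := by
    rw [LinearIndependent.pair_iff]
    intro p q h
    have hq : q = 0 := by
      by_contra hq
      apply hx
      refine ⟨-(p / q), ?_⟩
      have h' : algebraMap F K q ≠ 0 := by simpa using hq
      simp only [Algebra.smul_def, mul_one] at h
      rw [map_neg, map_div₀]
      field_simp
      linear_combination -h
    subst hq
    simpa using h
  have := hli.span_eq_top_of_card_eq_finrank' (by simp [h2])
  have hy : y ∈ Submodule.span F (Set.range ![(1 : K), x]) := by rw [this]; trivial
  rw [Matrix.range_cons, Matrix.range_cons, Matrix.range_empty, Set.union_empty] at hy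
  obtain ⟨p, q, h⟩ := Submodule.mem_span_pair.1 (show y ∈ Submodule.span F {1, x} from hy)
  exact ⟨p, q, by rw [← h]; simp [Algebra.smul_def]⟩

lemma exists_uu {x : Kˣ} (h : (x : K) ∈ Set.range (algebraMap F K)) : ∃ f : Fˣ, uu K f = x := by
  obtain ⟨f, hf⟩ := h
  have h0 : f ≠ 0 := by rintro rfl; simp at hf; exact x.ne_zero hf.symm
  exact ⟨Units.mk0 f h0, Units.ext (by simpa using hf)⟩

/-- Over a quadratic extension every `⟨1, x⟩ ⊗ ⟨1, y⟩` is a sum of multiples of such forms with a slot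
in `F`, because `1`, `x` and `y` are linearly dependent over `F`. -/
lemma P_P_mem_of_quadratic (h2 : finrank F K = 2) (D : AddSubgroup (WG K)) (w : WG K)
    (hD : ∀ (e : Kˣ) (f : Fˣ) (y : Kˣ), e • P (uu K f) (P y w) ∈ D) (e x y : Kˣ) :
    e • P x (P y w) ∈ D := by
  by_cases hx : (x : K) ∈ Set.range (algebraMap F K)
  · obtain ⟨f, rfl⟩ := exists_uu hx
    exact hD _ _ _
  by_cases hy : (y : K) ∈ Set.range (algebraMap F K)
  · obtain ⟨f, rfl⟩ := exists_uu hy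
    rw [P_comm]
    exact hD _ _ _
  obtain ⟨p, q, h⟩ := exists_lin_comb h2 hx y
  have hq : q ≠ 0 := by
    rintro rfl
    exact hy ⟨p, by simpa using h.symm⟩
  by_cases hp : p = 0
  · have : y = uu K (Units.mk0 q hq) * x := Units.ext (by simpa [hp] using h)
    rw [this, mul_comm, P_mul, map_add, P_P_self, zero_add, P_smul, P_comm, smul_smul]
    exact hD _ _ _
  ·
    -- with `y = p u` and `x = g⁻¹ v` one has `u + v = 1`
    let p' := uu K (Units.mk0 p hp)
    let g := uu K (Units.mk0 (p⁻¹ * q) (by simp [hp, hq]))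
    have hp' : (algebraMap F K p) ≠ 0 := by simpa using hp
    have huv : ((p'⁻¹ * y : Kˣ) : K) + (g * x : Kˣ) = 1 := by
      have c2 : (2 : K) = 0 := CharTwo.two_eq_zero
      simp [p', g, h]
      field_simp
      linear_combination algebraMap F K q * x * c2
    have hy' : y = p' * (p'⁻¹ * y) := by simp
    have hx' : x = g⁻¹ * (g * x) := by simp
    have e1 : P x (P y w) = P g⁻¹ (P y w) + g⁻¹ • P p' (P (g * x) w) := by
      have e2 : P (g * x) (P y w) = P p' (P (g * x) w) := by
        nth_rw 1 [hy']
        rw [P_mul p', map_add, P_smul, P_comm _ (p'⁻¹ * y), P_P_of_add_eq_one _ _ huv, smul_zero,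
          add_zero, P_comm]
      nth_rw 1 [hx']
      rw [P_mul, e2]
    rw [e1, smul_add, smul_smul, P_inv]
    exact add_mem (hD _ _ _) (hD _ _ _)

/-- Over a quadratic extension every multiple of a two-fold quadratic Pfister form is a sum of
such multiples with a slot in `F`. -/
lemma P_nb_mem_of_quadratic (h2 : finrank F K = 2) (D : AddSubgroup (WG K))
    (hD : ∀ (e : Kˣ) (f : Fˣ) (b : K), e • P (uu K f) (nb b) ∈ D)
    (hD' : ∀ (e z : Kˣ) (g : F), e • P z (nb (algebraMap F K g)) ∈ D) (e z : Kˣ) (b : K) :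
    e • P z (nb b) ∈ D := by
  by_cases hz : (z : K) ∈ Set.range (algebraMap F K)
  · obtain ⟨f, rfl⟩ := exists_uu hz
    exact hD _ _ _
  obtain ⟨p, q, rfl⟩ := exists_lin_comb h2 hz b
  rw [nb_add, map_add, smul_add]
  refine add_mem (hD' _ _ _) ?_
  by_cases hq : q = 0
  · simp [hq, nb_zero, zero_mem]
  let q' := uu K (Units.mk0 q hq)
  have h1 : algebraMap F K q * z = (q' * z : Kˣ) := by simp [q']
  have h3 : P z (nb (algebraMap F K q * z)) = q'⁻¹ • P q' (nb (algebraMap F K q * z)) := by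
    have hz : z = q'⁻¹ * (q' * z) := by simp
    rw [h1]
    nth_rw 1 [hz]
    rw [P_mul]
    have : P (q' * z) (nb ((q' * z : Kˣ) : K)) = 0 := by
      rw [P_apply, smul_nb_self, WG.add_self]
    rw [this, smul_zero, add_zero, P_inv]
    rw [P_apply, smul_add, smul_smul]
    simp only [inv_mul_cancel, one_smul]
    have h4 := P_inv q' (nb ((q' * z : Kˣ) : K))
    rw [P_apply, P_apply] at h4
    linear_combination (norm := abel) -h4
  rw [h3, smul_smul]
  exact hD _ _ _

/-- Over a quadratic extension, the generators of `I⁴(K)` can be chosen with three slots in `F`, so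
that the projection formula moves these slots out of the transfer. -/
lemma tr_mem_I4 (s : K →ₗ[F] F) (hs : s ≠ 0) (h2 : finrank F K = 2) {w : WG K} (hw : w ∈ I4 K) :
    tr s hs w ∈ I4 F := by
  have : I4 K ≤ (I4 F).comap (tr s hs) := by
    rw [I4, AddSubgroup.closure_le]
    rintro _ ⟨c, x, y, z, b, rfl⟩
    refine P_P_mem_of_quadratic h2 _ _ ?_ c x y
    intro e f y
    have := P_P_mem_of_quadratic h2 (((I4 F).comap (tr s hs)).comap (P (uu K f))) (nb b) ?_ e y z
    · simpa [P_smul] using this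
    intro e f' y
    have := P_nb_mem_of_quadratic h2
      (((I4 F).comap (tr s hs)).comap ((P (uu K f)).comp (P (uu K f')))) ?_ ?_ e y b
    · simpa [P_smul] using this
    · intro e f'' b
      simp only [AddSubgroup.mem_comap, AddMonoidHom.comp_apply, ← P_smul, tr_P]
      exact P_P_mem_I4 _ _ (P_mem_I2 _ _)
    · intro e z g
      simp only [AddSubgroup.mem_comap, AddMonoidHom.comp_apply, tr_P]
      refine P_P_mem_I4 _ _ ?_
      rw [P_apply, smul_add, smul_smul, map_add]
      exact add_mem (tr_nb_mem_I2 s hs h2 _ _) (tr_nb_mem_I2 s hs h2 _ _)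
  exact this hw

end Transfer

/-! ### Scalar extension, forms given by matrices, roundness of Pfister forms -/

section BaseChange

variable {F : Type} [Field F] (E : Type) [Field E] [Algebra F E]
variable {V V₁ V₂ : Type} [AddCommGroup V] [Module F V]
  [AddCommGroup V₁] [Module F V₁] [AddCommGroup V₂] [Module F V₂]

/-- Scalar extension of a form. -/
def bcForm (β : V →ₗ[F] V →ₗ[F] F) : (E ⊗[F] V) →ₗ[E] (E ⊗[F] V) →ₗ[E] E :=
  LinearMap.BilinForm.baseChange E β

@[simp] lemma bcForm_tmul (β : V →ₗ[F] V →ₗ[F] F) (a a' : E) (v v' : V) :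
    bcForm E β (a ⊗ₜ v) (a' ⊗ₜ v') = β v v' • (a * a') :=
  LinearMap.BilinForm.baseChange_tmul _ _ _ _ _

lemma ND.bcForm [FiniteDimensional F V] {β : V →ₗ[F] V →ₗ[F] F} (h : ND β) : ND (bcForm E β) := by
  classical
  intro x hx
  let b := finBasis F V
  let d := LinearMap.BilinForm.dualBasis _ h.polar_nondegenerate b
  have hd : ∀ i j, β (d i) (b j) + β (b j) (d i) = if j = i then 1 else 0 := fun i j =>
    LinearMap.BilinForm.apply_dualBasis_left h.polar_nondegenerate b i j
  let bE := b.baseChange E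
  have hbE : ∀ i, bE i = 1 ⊗ₜ b i := fun i => Basis.baseChange_apply _ _ _
  have key : ∀ i, bE.repr x i = 0 := by
    intro i
    have := hx (1 ⊗ₜ d i)
    rw [← bE.sum_repr x] at this
    simp only [map_sum, LinearMap.sum_apply, map_smul, LinearMap.smul_apply, hbE,
      bcForm_tmul, ← Finset.sum_add_distrib, ← smul_add, ← add_smul, mul_one] at this
    simp only [add_comm (β (b _) (d i)), hd] at this
    simpa using this
  exact bE.ext_elem fun i => by simp [key i]

/-- A linear map out of a scalar extension that preserves the form on the original space
preserves it everywhere. -/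
lemma bcForm_eq_of {V' : Type} [AddCommGroup V'] [Module E V'] {β : V →ₗ[F] V →ₗ[F] F}
    {β' : V' →ₗ[E] V' →ₗ[E] E} (g : (E ⊗[F] V) →ₗ[E] V')
    (hg : ∀ v w, β' (g (1 ⊗ₜ v)) (g (1 ⊗ₜ w)) = algebraMap F E (β v w)) (x y : E ⊗[F] V) :
    β' (g x) (g y) = bcForm E β x y := by
  have h1 : ∀ (a : E) (v : V), a ⊗ₜ[F] v = a • ((1 : E) ⊗ₜ[F] v) := fun a v => by
    rw [TensorProduct.smul_tmul', smul_eq_mul, mul_one]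
  induction x with
  | zero => simp
  | add x x' hx hx' => simp [hx, hx']
  | tmul a v =>
    induction y with
    | zero => simp
    | add y y' hy hy' => simp [hy, hy']
    | tmul a' v' =>
      rw [h1 a, h1 a']
      simp only [map_smul, LinearMap.smul_apply, hg, bcForm_tmul, mul_one, Algebra.smul_def,
        Algebra.algebraMap_self_apply]

lemma HasLag.bcForm [FiniteDimensional F V] {β : V →ₗ[F] V →ₗ[F] F} (h : HasLag β) :
    HasLag (bcForm E β) := by
  obtain ⟨W, hW, hd⟩ := h
  let g : (E ⊗[F] W) →ₗ[E] (E ⊗[F] V) := W.subtype.baseChange E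
  have hg : ∀ (a : E) (w : W), g (a ⊗ₜ w) = a ⊗ₜ (w : V) := fun a w => rfl
  refine ⟨LinearMap.range g, ?_, ?_⟩
  · have hpol : ∀ x y, AlbertDescent.bcForm E β (g x) (g y) + AlbertDescent.bcForm E β (g y) (g x) = 0 := by
      intro x y
      induction x with
      | zero => simp
      | add x x' hx hx' =>
        simp only [map_add, LinearMap.add_apply]
        linear_combination hx + hx'
      | tmul a v =>
        induction y with
        | zero => simp
        | add y y' hy hy' =>
          simp only [map_add, LinearMap.add_apply]
          linear_combination hy + hy'
        | tmul a' v' =>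
          rw [hg, hg, bcForm_tmul, bcForm_tmul, mul_comm a' a, ← add_smul,
            isotropic_polar hW v.2 v'.2, zero_smul]
    rintro _ ⟨x, rfl⟩
    induction x with
    | zero => simp
    | add x y hx hy =>
      simp only [map_add, LinearMap.add_apply]
      linear_combination hx + hy + hpol x y
    | tmul a v => simp [hg, hW v v.2]
  · rw [LinearMap.finrank_range_of_inj, Module.finrank_baseChange, Module.finrank_baseChange]
    · exact hd
    · exact Module.Flat.lTensor_preserves_injective_linearMap (M := E) W.subtype
        W.injective_subtype

variable [CharP F 2] [CharP E 2]

/-- The scalar extension homomorphism between Witt groups. -/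
noncomputable def res : WG F →+ WG E where
  toFun := Quotient.lift (fun A : NSF F => cls (bcForm E A.β) (A.nd.bcForm E)) (by
    intro A B h
    rw [cls_eq_iff]
    have h' : HasLag (AlbertDescent.osum A.β B.β) := h
    refine (h'.bcForm E).of_equiv (TensorProduct.prodRight F E E A.V B.V) fun x => ?_
    refine bcForm_eq_of E (TensorProduct.prodRight F E E A.V B.V).toLinearMap (fun v w => ?_) x x
    simp [Algebra.smul_def])
  map_zero' := by
    show cls _ _ = 0
    rw [cls_eq_zero_iff]
    refine HasLag.bcForm E ?_
    exact ⟨⊤, fun w _ => rfl, by simp; omega⟩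
  map_add' := by
    intro a b
    induction a using WG.ind with | h V₁ β₁ h₁ => ?_
    induction b using WG.ind with | h V₂ β₂ h₂ => ?_
    rw [cls_add]
    show cls _ _ = cls _ _ + cls _ _
    rw [cls_add]
    refine cls_congr (TensorProduct.prodRight F E E V₁ V₂) fun x => ?_
    refine bcForm_eq_of E (TensorProduct.prodRight F E E V₁ V₂).toLinearMap (fun v w => ?_) x x
    simp [Algebra.smul_def]

/-- Any space of the right dimension into which a form embeds realises its scalar extension. -/
lemma res_cls [FiniteDimensional F V] {V' : Type} [AddCommGroup V'] [Module E V']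
    [Module F V'] [IsScalarTower F E V'] [FiniteDimensional E V'] {β : V →ₗ[F] V →ₗ[F] F}
    {β' : V' →ₗ[E] V' →ₗ[E] E} (hβ : ND β) (hβ' : ND β') (f : V →ₗ[F] V')
    (hf : ∀ v w, β' (f v) (f w) = algebraMap F E (β v w)) (hd : finrank E V' = finrank F V) :
    res E (cls β hβ) = cls β' hβ' := by
  let g := f.liftBaseChange E
  have hg : ∀ x y, β' (g x) (g y) = bcForm E β x y :=
    bcForm_eq_of E g (fun v w => by simp [g, hf])
  have hinj : Function.Injective g := by
    rw [← LinearMap.ker_eq_bot, LinearMap.ker_eq_bot']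
    intro x hx
    refine hβ.bcForm E x fun y => ?_
    rw [← hg, ← hg, hx]; simp
  let e := LinearEquiv.ofInjectiveOfFinrankEq g hinj (by rw [Module.finrank_baseChange, hd])
  exact cls_congr e fun x => hg x x

lemma res_smul (c : Fˣ) (w : WG F) : res E (c • w) = uu E c • res E w := by
  induction w using WG.ind with | h V β hβ => ?_
  symm
  refine cls_congr (LinearEquiv.refl E _) fun x => ?_
  symm
  refine bcForm_eq_of (β := (c : F) • β) E (LinearMap.id) (fun v w => ?_) x x
  simp [Algebra.smul_def]

lemma res_P (c : Fˣ) (w : WG F) : res E (P c w) = P (uu E c) (res E w) := by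
  rw [P_apply, P_apply, map_add, res_smul]

lemma res_nb (b : F) : res E (nb b) = nb (algebraMap F E b) := by
  refine res_cls E _ _ ((Algebra.linearMap F E).prodMap (Algebra.linearMap F E)) (fun v w => ?_) ?_
  · simp
  · simp

end BaseChange

section MatrixForms

variable {ι : Type} [Fintype ι]

/-- The bilinear form of a matrix, over a commutative ring. -/
def bf {R : Type} [CommRing R] (A : Matrix ι ι R) (x y : ι → R) : R :=
  ∑ i, ∑ j, x i * A i j * y j

section Ring

variable {R S : Type} [CommRing R] [CommRing S] (A : Matrix ι ι R)

lemma bf_add_left (x y z : ι → R) : bf A (x + y) z = bf A x z + bf A y z := by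
  simp [bf, add_mul, Finset.sum_add_distrib]

lemma bf_add_right (x y z : ι → R) : bf A x (y + z) = bf A x y + bf A x z := by
  simp [bf, mul_add, Finset.sum_add_distrib]

lemma bf_smul_left (c : R) (x z : ι → R) : bf A (c • x) z = c * bf A x z := by
  simp [bf, Finset.mul_sum, mul_assoc]

lemma bf_smul_right (c : R) (x z : ι → R) : bf A x (c • z) = c * bf A x z := by
  simp only [bf, Finset.mul_sum, Pi.smul_apply, smul_eq_mul]
  refine Finset.sum_congr rfl fun i _ => Finset.sum_congr rfl fun j _ => by ring

lemma bf_zero_left (z : ι → R) : bf A 0 z = 0 := by simp [bf]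

lemma bf_zero_right (z : ι → R) : bf A z 0 = 0 := by simp [bf]

lemma bf_map (φ : R →+* S) (x y : ι → R) :
    bf (A.map φ) (φ ∘ x) (φ ∘ y) = φ (bf A x y) := by
  simp [bf]

/-- The polar form of the quadratic form `x ↦ bf A x x`. -/
def pl {R : Type} [CommRing R] (A : Matrix ι ι R) (x y : ι → R) : R := bf A x y + bf A y x

lemma bf_add_self (x y : ι → R) :
    bf A (x + y) (x + y) = bf A x x + pl A x y + bf A y y := by
  simp only [bf_add_left, bf_add_right, pl]; ring

lemma bf_smul_self (c : R) (x : ι → R) : bf A (c • x) (c • x) = c ^ 2 * bf A x x := by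
  simp only [bf_smul_left, bf_smul_right]; ring

lemma pl_add_left (x y z : ι → R) : pl A (x + y) z = pl A x z + pl A y z := by
  simp only [pl, bf_add_left, bf_add_right]; ring

lemma pl_smul_left (c : R) (x z : ι → R) : pl A (c • x) z = c * pl A x z := by
  simp only [pl, bf_smul_left, bf_smul_right]; ring

lemma pl_comm (x y : ι → R) : pl A x y = pl A y x := add_comm _ _

lemma pl_map (φ : R →+* S) (x y : ι → R) :
    pl (A.map φ) (φ ∘ x) (φ ∘ y) = φ (pl A x y) := by
  simp [pl, bf_map]

end Ring

variable {F : Type} [Field F]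

/-- The bilinear map attached to a matrix. -/
def mform (A : Matrix ι ι F) : (ι → F) →ₗ[F] (ι → F) →ₗ[F] F :=
  LinearMap.mk₂ F (bf A) (bf_add_left A) (bf_smul_left A) (bf_add_right A) (bf_smul_right A)

@[simp] lemma mform_apply (A : Matrix ι ι F) (x y : ι → F) : mform A x y = bf A x y := rfl

/-- Anisotropy of the quadratic form of a matrix. -/
def Aniso (A : Matrix ι ι F) : Prop := ∀ x, bf A x x = 0 → x = 0

/-- Every bilinear map on a coordinate space comes from a matrix. -/
lemma exists_mform (β : (ι → F) →ₗ[F] (ι → F) →ₗ[F] F) : ∃ A : Matrix ι ι F, mform A = β := by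
  classical
  refine ⟨Matrix.of fun i j => β (Pi.single i 1) (Pi.single j 1), ?_⟩
  refine (Pi.basisFun F ι).ext fun i => (Pi.basisFun F ι).ext fun j => ?_
  simp [bf, Pi.single_apply]

lemma ND.map_mform {E : Type} [Field E] [Algebra F E] {A : Matrix ι ι F} (hA : ND (mform A)) :
    ND (mform (A.map (algebraMap F E))) := by
  classical
  let e : E ⊗[F] (ι → F) ≃ₗ[E] (ι → E) := TensorProduct.piScalarRight F E E ι
  refine (hA.bcForm E).of_equiv e fun x => ?_
  refine bcForm_eq_of E e.toLinearMap (fun v w => ?_) x x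
  have : ∀ v, e.toLinearMap (1 ⊗ₜ v) = algebraMap F E ∘ v := fun v => by
    ext i; simp [e, Algebra.smul_def]
  rw [this, this]
  exact bf_map A (algebraMap F E) v w

variable [CharP F 2]

lemma res_mform (E : Type) [Field E] [Algebra F E] [CharP E 2] {A : Matrix ι ι F}
    (hA : ND (mform A)) :
    res E (cls (mform A) hA) = cls (mform (A.map (algebraMap F E))) hA.map_mform := by
  refine res_cls E _ _ ((Algebra.linearMap F E).compLeft ι) (fun v w => ?_) (by simp)
  exact bf_map A (algebraMap F E) v w

/-- Every nonzero value of the form `A` fixes the Witt class `w` under scaling, and `w` vanishes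
when `A` is isotropic. This holds for a Pfister form and its class. -/
def Rd (A : Matrix ι ι F) (w : WG F) : Prop :=
  (∀ (x : ι → F) (c : Fˣ), bf A x x = c → c • w = w) ∧ (∀ x, x ≠ 0 → bf A x x = 0 → w = 0)

/-- The matrix of `[1,b]`. -/
def nbMat {R : Type} [CommRing R] (b : R) : Matrix (Fin 2) (Fin 2) R := !![1, 1; 0, b]

/-- The matrix of `q ⊥ a q`. -/
def pm {R : Type} [CommRing R] (a : R) (A : Matrix ι ι R) : Matrix (ι ⊕ ι) (ι ⊕ ι) R :=
  Matrix.fromBlocks A 0 0 (a • A)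

lemma bf_nbMat {R : Type} [CommRing R] (b : R) (x : Fin 2 → R) :
    bf (nbMat b) x x = x 0 ^ 2 + x 0 * x 1 + b * x 1 ^ 2 := by
  simp [bf, nbMat, Fin.sum_univ_two]; ring

lemma bf_pm {R : Type} [CommRing R] (a : R) (A : Matrix ι ι R) (x : ι ⊕ ι → R) :
    bf (pm a A) x x = bf A (x ∘ Sum.inl) (x ∘ Sum.inl) + a * bf A (x ∘ Sum.inr) (x ∘ Sum.inr) := by
  simp [bf, pm, Finset.mul_sum]
  refine Finset.sum_congr rfl fun i _ => Finset.sum_congr rfl fun j _ => by ring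

lemma rd_nbMat (b : F) : Rd (nbMat b) (nb b) := by
  have h2 : (2 : F) = 0 := CharTwo.two_eq_zero
  constructor
  · intro x c hc
    rw [bf_nbMat] at hc
    by_cases hx : x 1 = 0
    · have h0 : x 0 ≠ 0 := by
        intro h0; apply c.ne_zero; rw [← hc, hx, h0]; simp
      have : c = Units.mk0 _ h0 * Units.mk0 _ h0 := Units.ext (by rw [← hc, hx]; simp; ring)
      rw [this, sq_smul]
    · -- `c` is a square times `d = b + z² + z`, and `[1,b] ≅ [1,d]` is a multiple of itself by `d`
      let y := Units.mk0 _ hx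
      let z := x 0 / x 1
      have hz : x 0 = z * x 1 := by simp [z, hx]
      have hd : (c : F) = y * y * (b + (z ^ 2 + z)) := by
        rw [← hc, hz]; simp [y]; ring
      have hd0 : b + (z ^ 2 + z) ≠ 0 := by
        intro h; apply c.ne_zero; rw [hd, h, mul_zero]
      have hnb : nb b = nb ((Units.mk0 _ hd0 : Fˣ) : F) := by
        rw [Units.val_mk0, nb_add, nb_wp, add_zero]
      have hc' : c = (y * y) * Units.mk0 _ hd0 := Units.ext (by simpa using hd)
      rw [hc', mul_smul, sq_smul, hnb, smul_nb_self]
  · intro x hx h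
    rw [bf_nbMat] at h
    have hx1 : x 1 ≠ 0 := by
      intro h1
      apply hx
      rw [h1] at h
      have : x 0 = 0 := by simpa using h
      ext i; fin_cases i <;> simp [this, h1]
    have : b = (x 0 / x 1) ^ 2 + x 0 / x 1 := by
      field_simp
      linear_combination h - (x 0 ^ 2 + x 0 * x 1) * h2
    rw [this, nb_wp]

lemma Rd.pm {A : Matrix ι ι F} {w : WG F} (h : Rd A w) (a : Fˣ) : Rd (pm (a : F) A) (P a w) := by
  have h2 : (2 : F) = 0 := CharTwo.two_eq_zero
  constructor
  · intro x c hc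
    rw [bf_pm] at hc
    by_cases hs : bf A (x ∘ Sum.inl) (x ∘ Sum.inl) = 0
    · have ht : bf A (x ∘ Sum.inr) (x ∘ Sum.inr) ≠ 0 := by
        intro ht; apply c.ne_zero; rw [← hc, hs, ht]; simp
      have h1 := h.1 _ (Units.mk0 _ ht) rfl
      have : c = a * Units.mk0 _ ht := Units.ext (by rw [← hc, hs]; simp)
      rw [this, P_apply, smul_add, mul_smul, h1, smul_smul, mul_right_comm, mul_smul (a * a), h1,
        sq_smul, add_comm]
    by_cases ht : bf A (x ∘ Sum.inr) (x ∘ Sum.inr) = 0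
    · have h1 := h.1 _ (Units.mk0 _ hs) rfl
      have : c = Units.mk0 _ hs := Units.ext (by rw [← hc, ht]; simp)
      rw [this, ← P_smul, h1]
    have h1 := h.1 _ (Units.mk0 _ hs) rfl
    have h3 := h.1 _ (Units.mk0 _ ht) rfl
    set s := Units.mk0 _ hs
    set t := Units.mk0 _ ht
    have hrel := add_smul_rel s (a * t) c (by rw [← hc]; simp [s, t]) w
    have e1 : (s * (a * t) * c) • w = (c * a) • w := by
      rw [show s * (a * t) * c = (c * a) * (s * t) by
        simp only [mul_comm, mul_left_comm, mul_assoc], mul_smul (c * a), mul_smul s, h3, h1]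
    rw [e1, h1, mul_smul, h3] at hrel
    rw [P_apply, smul_add, smul_smul, ← hrel]
  · intro x hx hx0
    rw [bf_pm] at hx0
    by_cases hs : bf A (x ∘ Sum.inl) (x ∘ Sum.inl) = 0
    · have ht : bf A (x ∘ Sum.inr) (x ∘ Sum.inr) = 0 := by simpa [hs] using hx0
      have : w = 0 := by
        by_cases hl : x ∘ Sum.inl = 0
        · refine h.2 (x ∘ Sum.inr) (fun hr => hx ?_) ht
          ext (i | i)
          · exact congrFun hl i
          · exact congrFun hr i
        · exact h.2 _ hl hs
      rw [this, map_zero]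
    · have ht : bf A (x ∘ Sum.inr) (x ∘ Sum.inr) ≠ 0 := by
        intro ht; apply hs; simpa [ht] using hx0
      have h1 := h.1 _ (Units.mk0 _ hs) rfl
      have h3 := h.1 _ (Units.mk0 _ ht) rfl
      have : Units.mk0 _ hs = a * Units.mk0 _ ht := Units.ext (by
        simp; linear_combination hx0 - (a * bf A (x ∘ Sum.inr) (x ∘ Sum.inr)) * h2)
      rw [this, mul_smul, h3] at h1
      rw [P_apply, h1, WG.add_self]

end MatrixForms

/-! ### The Cassels–Pfister theorem -/

section CasselsPfister

open Polynomial

variable {ι : Type} [Fintype ι] {E : Type} [Field E]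

lemma natDegree_bf_le (A : Matrix ι ι E) (p q : ι → E[X]) (N M : ℕ)
    (hp : ∀ i, (p i).natDegree ≤ N) (hq : ∀ i, (q i).natDegree ≤ M) :
    (bf (A.map C) p q).natDegree ≤ N + M := by
  refine natDegree_sum_le_of_forall_le _ _ fun i _ => natDegree_sum_le_of_forall_le _ _ fun j _ => ?_
  refine natDegree_mul_le_of_le ?_ (hq j)
  simpa using natDegree_mul_le_of_le (hp i) (natDegree_C (A i j)).le

lemma coeff_bf (A : Matrix ι ι E) (p q : ι → E[X]) (N M : ℕ)
    (hp : ∀ i, (p i).natDegree ≤ N) (hq : ∀ i, (q i).natDegree ≤ M) :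
    (bf (A.map C) p q).coeff (N + M) = bf A (fun i => (p i).coeff N) (fun i => (q i).coeff M) := by
  simp only [bf, finsetSum_coeff, Matrix.map_apply]
  refine Finset.sum_congr rfl fun i _ => Finset.sum_congr rfl fun j _ => ?_
  rw [coeff_mul_add_eq_of_natDegree_le (by simpa using natDegree_mul_le_of_le (hp i) (natDegree_C (A i j)).le)
    (hq j), coeff_mul_C]

/-- Leading coefficients of a vector of polynomials cannot cancel in an anisotropic form. -/
lemma Aniso.coeff_eq_zero {A : Matrix ι ι E} (hA : Aniso A) (p : ι → E[X]) (D : ℕ)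
    (h : ∀ m, D ≤ m → (bf (A.map C) p p).coeff (m + m) = 0) :
    ∀ i m, D ≤ m → (p i).coeff m = 0 := by
  have key : ∀ N : ℕ, (∀ i m, N ≤ m → (p i).coeff m = 0) → ∀ i m, D ≤ m → (p i).coeff m = 0 := by
    intro N
    induction N with
    | zero => intro h0 i m _; exact h0 i m (Nat.zero_le _)
    | succ N ih =>
      intro hN
      by_cases hD : D ≤ N
      · have hdeg : ∀ i, (p i).natDegree ≤ N := fun i =>
          natDegree_le_iff_coeff_eq_zero.2 fun m hm => hN i m hm
        have hc := h N hD
        rw [coeff_bf A p p N N hdeg hdeg] at hc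
        have hz := hA _ hc
        refine ih fun i m hm => ?_
        rcases hm.eq_or_lt with rfl | hm
        · exact congrFun hz i
        · exact hN i m hm
      · intro i m hm
        exact hN i m (by omega)
  refine key (Finset.univ.sup (fun i => (p i).natDegree) + 1) fun i m hm => ?_
  refine coeff_eq_zero_of_natDegree_lt ?_
  have := Finset.le_sup (f := fun i => (p i).natDegree) (Finset.mem_univ i)
  omega

lemma Aniso.poly {A : Matrix ι ι E} (hA : Aniso A) (p : ι → E[X])
    (h : bf (A.map C) p p = 0) : p = 0 := by
  ext i m
  simpa using hA.coeff_eq_zero p 0 (by simp [h]) i m (Nat.zero_le _)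

lemma exists_common_denom (x : ι → RatFunc E) : ∃ (f : ι → E[X]) (d : E[X]), d ≠ 0 ∧
    ∀ i, algebraMap E[X] (RatFunc E) (f i) = algebraMap E[X] (RatFunc E) d * x i := by
  obtain ⟨b, hb⟩ := IsLocalization.exist_integer_multiples_of_finite (nonZeroDivisors E[X]) x
  choose f hf using hb
  refine ⟨f, b, nonZeroDivisors.ne_zero b.2, fun i => ?_⟩
  rw [hf i, Algebra.smul_def]

lemma map_algebraMap_ratFunc {κ : Type} (A : Matrix ι κ E) :
    A.map (algebraMap E (RatFunc E)) = (A.map C).map (algebraMap E[X] (RatFunc E)) := by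
  ext i j
  simp [RatFunc.algebraMap_eq_C]

/-- An anisotropic form stays anisotropic over the rational function field. -/
lemma Aniso.ratFunc {A : Matrix ι ι E} (hA : Aniso A) :
    Aniso (A.map (algebraMap E (RatFunc E))) := by
  intro x hx
  obtain ⟨f, d, hd, hf⟩ := exists_common_denom x
  have hd' : algebraMap E[X] (RatFunc E) d ≠ 0 := by simpa using hd
  have e1 : (algebraMap E[X] (RatFunc E)) ∘ f = algebraMap E[X] (RatFunc E) d • x := by
    ext i; simp [hf]
  have h0 : bf (A.map C) f f = 0 := by
    apply IsFractionRing.injective E[X] (RatFunc E)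
    rw [← bf_map, e1, ← map_algebraMap_ratFunc, bf_smul_self, hx, mul_zero, map_zero]
  have := hA.poly f h0
  ext i
  have hi := hf i
  rw [this] at hi
  simpa [hd] using hi.symm

variable [CharP E 2]

/-- The Cassels–Pfister theorem in characteristic 2, with linear side conditions: if `g` is
represented over `E(X)` by an anisotropic constant form, by a vector with prescribed polar
products `h k` with constant vectors `W k`, then the representing vector may be taken over
`E[X]`. -/
lemma cassels_pfister {A : Matrix ι ι E} (hA : Aniso A) {κ : Type} (W : κ → ι → E)
    (g : E[X]) (h : κ → E[X]) : ∀ (N : ℕ) (d : E[X]) (f : ι → E[X]), d.natDegree = N → d ≠ 0 →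
      bf (A.map C) f f = d ^ 2 * g → (∀ k, pl (A.map C) f (C ∘ W k) = d * h k) →
      ∃ p : ι → E[X], bf (A.map C) p p = g ∧ ∀ k, pl (A.map C) p (C ∘ W k) = h k := by
  have h2 : (2 : E[X]) = 0 := CharTwo.two_eq_zero
  intro N
  induction N using Nat.strong_induction_on with
  | _ N ih =>
  intro d f hN hd hf hh
  let p : ι → E[X] := fun i => f i / d
  let r : ι → E[X] := fun i => f i % d
  have hfd : f = d • p + r := by
    ext1 i; exact (EuclideanDomain.div_add_mod (f i) d).symm
  have hr : ∀ i, (r i).degree < d.degree := fun i => EuclideanDomain.mod_lt _ hd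
  have hq : d ^ 2 * bf (A.map C) p p + d * pl (A.map C) p r + bf (A.map C) r r = d ^ 2 * g := by
    rw [← hf, hfd, bf_add_self, bf_smul_self, pl_smul_left]
  have hrW : ∀ k, pl (A.map C) r (C ∘ W k) = 0 := by
    intro k
    have h1 : d * pl (A.map C) p (C ∘ W k) + pl (A.map C) r (C ∘ W k) = d * h k := by
      rw [← hh, hfd, pl_add_left, pl_smul_left]
    have hdvd : d ∣ pl (A.map C) r (C ∘ W k) :=
      ⟨h k - pl (A.map C) p (C ∘ W k), by linear_combination h1⟩
    refine eq_zero_of_dvd_of_degree_lt hdvd ?_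
    have hbot : ⊥ < d.degree := by rw [bot_lt_iff_ne_bot, Ne, degree_eq_bot]; exact hd
    have hC : ∀ (i : ι) (c c' : E), (r i * C c * C c').degree < d.degree := by
      intro i c c'
      rw [mul_assoc, ← C_mul]
      by_cases hc : c * c' = 0
      · simpa [hc] using hbot
      · rw [degree_mul_C hc]; exact hr i
    refine lt_of_le_of_lt (degree_add_le _ _) (max_lt ?_ ?_)
    · refine lt_of_le_of_lt (degree_sum_le _ _) ((Finset.sup_lt_iff hbot).2 fun i _ => ?_)
      refine lt_of_le_of_lt (degree_sum_le _ _) ((Finset.sup_lt_iff hbot).2 fun j _ => ?_)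
      exact hC i _ _
    · refine lt_of_le_of_lt (degree_sum_le _ _) ((Finset.sup_lt_iff hbot).2 fun i _ => ?_)
      refine lt_of_le_of_lt (degree_sum_le _ _) ((Finset.sup_lt_iff hbot).2 fun j _ => ?_)
      have := hC j (W k i) (A i j)
      rwa [show r j * C (W k i) * C (A i j) = (C ∘ W k) i * A.map C i j * r j by
        simp; ring] at this
  have hpW : ∀ k, pl (A.map C) p (C ∘ W k) = h k := by
    intro k
    have h1 : d * pl (A.map C) p (C ∘ W k) + pl (A.map C) r (C ∘ W k) = d * h k := by
      rw [← hh, hfd, pl_add_left, pl_smul_left]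
    rw [hrW, add_zero] at h1
    exact mul_left_cancel₀ hd h1
  by_cases hr0 : r = 0
  · refine ⟨p, ?_, hpW⟩
    rw [hfd, hr0, add_zero, bf_smul_self] at hf
    exact mul_left_cancel₀ (pow_ne_zero 2 hd) hf
  -- the reflected vector `d' p + k r` has the smaller denominator `d' = q(r) / d`
  set k := g + bf (A.map C) p p with hk
  set d' := d * k + pl (A.map C) p r with hd'
  have hdd : d * d' = bf (A.map C) r r := by
    rw [hd', hk]
    linear_combination (-1 : E[X]) * hq + (d ^ 2 * bf (A.map C) p p + d * pl (A.map C) p r) * h2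
  have hqr : bf (A.map C) r r ≠ 0 := fun h0 => hr0 (hA.poly r h0)
  have hd'0 : d' ≠ 0 := by
    intro h0; apply hqr; rw [← hdd, h0, mul_zero]
  have hrn : ∀ i, (r i).natDegree ≤ N - 1 := by
    intro i
    by_cases hi : r i = 0
    · simp [hi]
    · have := natDegree_lt_natDegree hi (hr i)
      omega
  have hNpos : 0 < N := by
    by_contra h0
    apply hr0
    ext1 i
    by_contra hi
    have := natDegree_lt_natDegree hi (hr i)
    omega
  have hlt : d'.natDegree < N := by
    have h1 := natDegree_bf_le A r r _ _ hrn hrn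
    rw [← hdd, natDegree_mul hd hd'0] at h1
    omega
  refine ih _ hlt d' (d' • p + k • r) rfl hd'0 ?_ ?_
  · have e1 : bf (A.map C) (d' • p + k • r) (d' • p + k • r) =
        d' ^ 2 * bf (A.map C) p p + d' * k * pl (A.map C) p r + k ^ 2 * bf (A.map C) r r := by
      rw [bf_add_self, bf_smul_self, bf_smul_self, pl_smul_left, pl_comm, pl_smul_left,
        pl_comm _ r p]
      ring
    rw [e1, ← hdd]
    have e2 : pl (A.map C) p r = d' - d * k := by rw [hd']; ring
    rw [e2, hk]
    linear_combination (d' ^ 2 * bf (A.map C) p p) * h2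
  · intro i
    rw [pl_add_left, pl_smul_left, pl_smul_left, hpW, hrW, mul_zero, add_zero]

end CasselsPfister

/-! ### The subform theorem -/

section Subform

open Polynomial

variable {ι ι' κ : Type} [Fintype ι] [Fintype ι'] {E : Type} [Field E]

lemma bf_line (A : Matrix ι ι E) (x e : ι → E) :
    bf (A.map C) (C ∘ x + (X : E[X]) • (C ∘ e)) (C ∘ x + (X : E[X]) • (C ∘ e)) =
      C (bf A e e) * X ^ 2 + C (pl A x e) * X + C (bf A x x) := by
  rw [bf_add_self, bf_smul_self, pl_comm, pl_smul_left, pl_comm]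
  have h1 := bf_map A (C : E →+* E[X])
  have h3 := pl_map A (C : E →+* E[X])
  rw [h1, h1, h3]; ring

lemma pl_line (A : Matrix ι ι E) (x e y : ι → E) :
    pl (A.map C) (C ∘ x + (X : E[X]) • (C ∘ e)) (C ∘ y) =
      C (pl A e y) * X + C (pl A x y) := by
  have h3 := pl_map A (C : E →+* E[X])
  rw [pl_add_left, pl_smul_left, h3, h3]; ring

lemma quadratic_coeffs {a b c a' b' c' : E}
    (h : C a * X ^ 2 + C b * X + C c = C a' * X ^ 2 + C b' * X + C c') :
    a = a' ∧ b = b' ∧ c = c' := by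
  refine ⟨?_, ?_, ?_⟩
  · simpa [coeff_X, coeff_C] using congrArg (fun p => coeff p 2) h
  · simpa [coeff_X, coeff_C, coeff_X_pow] using congrArg (fun p => coeff p 1) h
  · simpa [coeff_X, coeff_C, coeff_X_pow] using congrArg (fun p => coeff p 0) h

variable [CharP E 2]

/-- A representation over `E(X)` of the values of `A'` along the line `x + X e` by the anisotropic
form `A` can be chosen of degree at most one in `X`. -/
lemma exists_line {A : Matrix ι ι E} (hA : Aniso A) (A' : Matrix ι' ι' E) (W : κ → ι → E)
    (y : κ → ι' → E) (x e : ι' → E)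
    (H : ∃ w : ι → RatFunc E,
      bf (A.map (algebraMap E (RatFunc E))) w w = algebraMap E[X] (RatFunc E)
        (C (bf A' e e) * X ^ 2 + C (pl A' x e) * X + C (bf A' x x)) ∧
      ∀ k, pl (A.map (algebraMap E (RatFunc E))) w (algebraMap E (RatFunc E) ∘ W k) =
        algebraMap E[X] (RatFunc E) (C (pl A' e (y k)) * X + C (pl A' x (y k)))) :
    ∃ w₀ w₁ : ι → E, bf A w₁ w₁ = bf A' e e ∧ pl A w₀ w₁ = pl A' x e ∧ bf A w₀ w₀ = bf A' x x ∧
      ∀ k, pl A w₁ (W k) = pl A' e (y k) ∧ pl A w₀ (W k) = pl A' x (y k) := by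
  obtain ⟨w, hw, hwW⟩ := H
  obtain ⟨f, d, hd, hf⟩ := exists_common_denom w
  have e1 : (algebraMap E[X] (RatFunc E)) ∘ f = algebraMap E[X] (RatFunc E) d • w := by
    ext i; simp [hf]
  have hinj := IsFractionRing.injective E[X] (RatFunc E)
  obtain ⟨p, hp, hpW⟩ := cassels_pfister hA W
    (C (bf A' e e) * X ^ 2 + C (pl A' x e) * X + C (bf A' x x))
    (fun k => C (pl A' e (y k)) * X + C (pl A' x (y k))) _ d f rfl hd
    (by
      apply hinj
      rw [← bf_map, e1, ← map_algebraMap_ratFunc, bf_smul_self, hw, map_mul, map_pow])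
    (by
      intro k
      apply hinj
      rw [← pl_map, e1, ← map_algebraMap_ratFunc, pl_smul_left, map_mul, ← hwW]
      congr 2)
  have hc := hA.coeff_eq_zero p 2 (by
    intro m hm
    rw [hp]
    simp [coeff_X, coeff_C, coeff_X_pow, show m + m ≠ 2 by omega,  show 1 ≠ m + m by omega, show m ≠ 0 by omega])
  have hp' : p = C ∘ (fun i => (p i).coeff 0) + (X : E[X]) • (C ∘ fun i => (p i).coeff 1) := by
    ext1 i
    rw [eq_X_add_C_of_natDegree_le_one (natDegree_le_iff_coeff_eq_zero.2 fun m hm => hc i m hm)]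
    simp
    ring
  rw [hp', bf_line] at hp
  obtain ⟨h1, h3, h4⟩ := quadratic_coeffs hp
  refine ⟨_, _, h1, h3, h4, fun k => ?_⟩
  have hk := hpW k
  rw [hp', pl_line] at hk
  obtain ⟨-, h5, h6⟩ := quadratic_coeffs (by simpa using hk :
    C (0 : E) * X ^ 2 + C (pl A (fun i => (p i).coeff 1) (W k)) * X +
      C (pl A (fun i => (p i).coeff 0) (W k)) =
    C 0 * X ^ 2 + C (pl A' e (y k)) * X + C (pl A' x (y k)))
  exact ⟨h5, h6⟩

/-- The condition used for the induction in `card_le_of_represents`: over every field extension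
keeping `A` anisotropic, each value `A'(x)` is represented by `A` at a vector whose polar products
with the `W i`, `i ∈ S`, are those of `x` with the standard basis vectors. -/
def Represents [DecidableEq ι'] {F : Type} [Field F] (A : Matrix ι ι F) (A' : Matrix ι' ι' F)
    (S : Finset ι') (W : ι' → ι → F) : Prop :=
  ∀ (E : Type) [Field E] [CharP E 2] (φ : F →+* E), Aniso (A.map φ) → ∀ x : ι' → E,
    ∃ w : ι → E, bf (A.map φ) w w = bf (A'.map φ) x x ∧
      ∀ i ∈ S, pl (A.map φ) w (φ ∘ W i) = pl (A'.map φ) x (φ ∘ Pi.single i 1)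

lemma Represents.line [DecidableEq ι'] {F : Type} [Field F] {A : Matrix ι ι F}
    {A' : Matrix ι' ι' F} {S : Finset ι'} {W : ι' → ι → F} (h : Represents A A' S W)
    (φ : F →+* E) (hA : Aniso (A.map φ)) (x e : ι' → E) :
    ∃ w₀ w₁ : ι → E, bf (A.map φ) w₁ w₁ = bf (A'.map φ) e e ∧
      pl (A.map φ) w₀ w₁ = pl (A'.map φ) x e ∧ bf (A.map φ) w₀ w₀ = bf (A'.map φ) x x ∧
      ∀ k : S, pl (A.map φ) w₁ (φ ∘ W k) = pl (A'.map φ) e (φ ∘ Pi.single (k : ι') 1) ∧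
        pl (A.map φ) w₀ (φ ∘ W k) = pl (A'.map φ) x (φ ∘ Pi.single (k : ι') 1) := by
  have : CharP (RatFunc E) 2 :=
    charP_of_injective_algebraMap (algebraMap E (RatFunc E)).injective 2
  refine exists_line (κ := S) hA (A'.map φ) (fun k => φ ∘ W k)
    (fun k => φ ∘ Pi.single (k : ι') 1) x e ?_
  obtain ⟨w, hw, hwW⟩ := h (RatFunc E) ((algebraMap E (RatFunc E)).comp φ) hA.ratFunc
    (algebraMap E[X] (RatFunc E) ∘ (C ∘ x + (X : E[X]) • (C ∘ e)))
  have hmap : A'.map ((algebraMap E (RatFunc E)).comp φ) =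
      ((A'.map φ).map C).map (algebraMap E[X] (RatFunc E)) := by
    rw [← map_algebraMap_ratFunc]; rfl
  refine ⟨w, ?_, fun k => ?_⟩
  · rw [← bf_line, ← bf_map, ← hmap]
    exact hw
  · rw [← pl_line, ← pl_map, ← hmap]
    refine (hwW k k.2).trans ?_
    congr 1

lemma pl_self {R : Type} [CommRing R] [CharP R 2] (A : Matrix ι ι R) (x : ι → R) :
    pl A x x = 0 := CharTwo.add_self_eq_zero _

/-- If an anisotropic form represents all values of `A'` over every extension keeping it
anisotropic, then it contains `A'` as a subform; only the inequality of dimensions is recorded. -/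
theorem card_le_of_represents [DecidableEq ι'] {F : Type} [Field F] [CharP F 2]
    (A : Matrix ι ι F) (A' : Matrix ι' ι' F) (hA : Aniso A) (hA' : Aniso A')
    (H : ∀ (E : Type) [Field E] [CharP E 2] (φ : F →+* E), Aniso (A.map φ) → ∀ x : ι' → E,
      ∃ w : ι → E, bf (A.map φ) w w = bf (A'.map φ) x x) :
    Fintype.card ι' ≤ Fintype.card ι := by
  have key : ∀ S : Finset ι', ∃ W : ι' → ι → F,
      (∀ i ∈ S, bf A (W i) (W i) = bf A' (Pi.single i 1) (Pi.single i 1)) ∧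
      (∀ i ∈ S, ∀ j ∈ S, pl A (W i) (W j) = pl A' (Pi.single i 1) (Pi.single j 1)) ∧
      Represents A A' S W := by
    intro S
    induction S using Finset.induction_on with
    | empty =>
      refine ⟨0, by simp, by simp, fun E _ _ φ hφ x => ?_⟩
      obtain ⟨w, hw⟩ := H E φ hφ x
      exact ⟨w, hw, by simp⟩
    | insert j S hj ih =>
      obtain ⟨W, hW1, hW2, hR⟩ := ih
      obtain ⟨_, u, hu1, _, _, hu2⟩ := hR.line (RingHom.id F) hA 0 (Pi.single j 1)
      have hu1 : bf A u u = bf A' (Pi.single j 1) (Pi.single j 1) := hu1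
      have hu2 : ∀ i ∈ S, pl A u (W i) = pl A' (Pi.single j 1) (Pi.single i 1) :=
        fun i hi => (hu2 ⟨i, hi⟩).1
      have hne : ∀ i ∈ S, i ≠ j := fun i hi h => hj (h ▸ hi)
      have hWj : Function.update W j u j = u := Function.update_self ..
      have hWi : ∀ i ∈ S, Function.update W j u i = W i := fun i hi =>
        Function.update_of_ne (hne i hi) _ _
      refine ⟨Function.update W j u, ?_, ?_, ?_⟩
      · intro i hi
        rcases Finset.mem_insert.1 hi with rfl | hi
        · rw [hWj, hu1]
        · rw [hWi i hi, hW1 i hi]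
      · intro i hi k hk
        rcases Finset.mem_insert.1 hi with hij | hi' <;>
          rcases Finset.mem_insert.1 hk with hkj | hk'
        · rw [hij, hkj, pl_self, pl_self]
        · rw [hij, hWj, hWi k hk', hu2 k hk']
        · rw [hkj, hWj, hWi i hi', pl_comm, hu2 i hi', pl_comm]
        · rw [hWi i hi', hWi k hk', hW2 i hi' k hk']
      · intro E _ _ φ hφ x
        have h2 : (2 : E) = 0 := CharTwo.two_eq_zero
        obtain ⟨w₀, w₁, h11, h01, h00, hk⟩ := hR.line φ hφ x (φ ∘ Pi.single j 1)
        have huE : bf (A.map φ) (φ ∘ u) (φ ∘ u) =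
            bf (A'.map φ) (φ ∘ Pi.single j 1) (φ ∘ Pi.single j 1) := by
          rw [bf_map, bf_map, hu1]
        have huW : ∀ i ∈ S, pl (A.map φ) (φ ∘ u) (φ ∘ W i) =
            pl (A'.map φ) (φ ∘ Pi.single j 1) (φ ∘ Pi.single i 1) := by
          intro i hi
          rw [pl_map, pl_map, hu2 i hi]
        set v := w₁ + φ ∘ u with hv
        have hw1 : w₁ = v + φ ∘ u := by
          rw [hv, add_assoc]
          ext i
          simp [CharTwo.add_self_eq_zero]
        have hqv : bf (A.map φ) v v = pl (A.map φ) w₁ (φ ∘ u) := by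
          rw [hv, bf_add_self, huE, h11]
          linear_combination bf (A'.map φ) (φ ∘ Pi.single j 1) (φ ∘ Pi.single j 1) * h2
        have hvu : pl (A.map φ) v (φ ∘ u) = bf (A.map φ) v v := by
          rw [hqv, hv, pl_add_left, pl_self, add_zero]
        have hvW : ∀ i ∈ S, pl (A.map φ) v (φ ∘ W i) = 0 := by
          intro i hi
          rw [hv, pl_add_left, (hk ⟨i, hi⟩).1, huW i hi]
          exact CharTwo.add_self_eq_zero _
        -- reflect `w₀` along `v` so that its polar product with `u` becomes the prescribed one
        obtain ⟨c, hc⟩ : ∃ c : E, c * bf (A.map φ) v v = pl (A.map φ) w₀ v := by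
          by_cases hv0 : bf (A.map φ) v v = 0
          · have := hφ v hv0
            exact ⟨0, by rw [this]; simp [pl, bf_zero_left, bf_zero_right]⟩
          · exact ⟨pl (A.map φ) w₀ v / bf (A.map φ) v v, div_mul_cancel₀ _ hv0⟩
        refine ⟨w₀ + c • v, ?_, ?_⟩
        · rw [bf_add_self, bf_smul_self, pl_comm, pl_smul_left, pl_comm, ← hc, h00]
          linear_combination (c ^ 2 * bf (A.map φ) v v) * h2
        · intro i hi
          rcases Finset.mem_insert.1 hi with rfl | hi
          · rw [hWj, pl_add_left, pl_smul_left, hvu, hc, ← h01, pl_comm _ w₀ w₁, hw1, pl_add_left,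
              pl_comm _ v, pl_comm _ (φ ∘ u), add_comm]
          · rw [hWi i hi, pl_add_left, pl_smul_left, hvW i hi, mul_zero, add_zero,
              (hk ⟨i, hi⟩).2]
  obtain ⟨W, hW1, hW2, -⟩ := key Finset.univ
  have hW1 : ∀ i, bf A (W i) (W i) = bf A' (Pi.single i 1) (Pi.single i 1) :=
    fun i => hW1 i (Finset.mem_univ _)
  have hW2 : ∀ i j, pl A (W i) (W j) = pl A' (Pi.single i 1) (Pi.single j 1) :=
    fun i j => hW2 i (Finset.mem_univ _) j (Finset.mem_univ _)
  have hiso : ∀ (S : Finset ι') (x : ι' → F),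
      bf A (∑ i ∈ S, x i • W i) (∑ i ∈ S, x i • W i) =
        bf A' (∑ i ∈ S, x i • Pi.single i 1) (∑ i ∈ S, x i • Pi.single i 1) ∧
      ∀ j, pl A (∑ i ∈ S, x i • W i) (W j) =
        pl A' (∑ i ∈ S, x i • Pi.single i 1) (Pi.single j 1) := by
    intro S x
    induction S using Finset.induction_on with
    | empty => simp [pl, bf_zero_left, bf_zero_right]
    | insert k S hk ih =>
      rw [Finset.sum_insert hk, Finset.sum_insert hk]
      constructor
      · rw [bf_add_self, bf_add_self, bf_smul_self, bf_smul_self, hW1, pl_smul_left, pl_smul_left,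
          pl_comm, pl_comm A', ih.1, ih.2]
      · intro j
        rw [pl_add_left, pl_add_left, pl_smul_left, pl_smul_left, hW2, ih.2]
  let f : (ι' → F) →ₗ[F] (ι → F) := Fintype.linearCombination F W
  have hf : Function.Injective f := by
    rw [← LinearMap.ker_eq_bot, LinearMap.ker_eq_bot']
    intro x hx
    have h1 := (hiso Finset.univ x).1
    have h3 : ∑ i, x i • (Pi.single i 1 : ι' → F) = x := by
      ext j; simp [Pi.single_apply]
    rw [h3] at h1
    have h4 : ∑ i, x i • W i = 0 := hx
    rw [h4, bf_zero_left] at h1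
    exact hA' x h1.symm
  simpa using LinearMap.finrank_le_finrank_of_injective hf

end Subform

/-! ### The Hauptsatz for fourfold Pfister forms -/

section Hauptsatz

/-- `w` is a sum of `n` multiples of classes of fourfold quadratic Pfister forms. -/
def IsSum {F : Type} [Field F] [CharP F 2] : ℕ → WG F → Prop
  | 0, w => w = 0
  | n + 1, w => ∃ (c x y z : Fˣ) (b : F) (w' : WG F), IsSum n w' ∧
      w = w' + c • P x (P y (P z (nb b)))

lemma IsSum.res {F : Type} [Field F] [CharP F 2] (E : Type) [Field E] [Algebra F E] [CharP E 2]
    {n : ℕ} : ∀ {w : WG F}, IsSum n w → IsSum n (res E w) := by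
  induction n with
  | zero => intro w h; simp only [IsSum] at h; subst h; exact map_zero _
  | succ n ih =>
    rintro w ⟨c, x, y, z, b, w', hw', rfl⟩
    exact ⟨uu E c, uu E x, uu E y, uu E z, algebraMap F E b, AlbertDescent.res E w', ih hw', by
      rw [map_add, res_smul, res_P, res_P, res_P, res_nb]⟩

lemma IsSum.add {F : Type} [Field F] [CharP F 2] {m : ℕ} {v : WG F} (hv : IsSum m v) {n : ℕ} :
    ∀ {w : WG F}, IsSum n w → IsSum (m + n) (v + w) := by
  induction n with
  | zero => intro w h; simp only [IsSum] at h; subst h; simpa using hv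
  | succ n ih =>
    rintro w ⟨c, x, y, z, b, w', hw', rfl⟩
    exact ⟨c, x, y, z, b, v + w', ih hw', by rw [add_assoc]⟩

lemma exists_isSum {F : Type} [Field F] [CharP F 2] {w : WG F} (hw : w ∈ I4 F) :
    ∃ n, IsSum n w := by
  induction hw using AddSubgroup.closure_induction with
  | mem w h =>
    obtain ⟨c, x, y, z, b, rfl⟩ := h
    exact ⟨1, c, x, y, z, b, 0, rfl, by rw [zero_add]⟩
  | zero => exact ⟨0, rfl⟩
  | add v w _ _ hv hw =>
    obtain ⟨m, hm⟩ := hv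
    obtain ⟨n, hn⟩ := hw
    exact ⟨m + n, hm.add hn⟩
  | neg w _ hw => rwa [neg_eq_of_add_eq_zero_left (WG.add_self w)]

lemma pm_map {ι R S : Type} [Fintype ι] [CommRing R] [CommRing S] (φ : R →+* S) (a : R)
    (A : Matrix ι ι R) : (pm a A).map φ = pm (φ a) (A.map φ) := by
  ext (i | i) (j | j) <;> simp [pm]

lemma nbMat_map {R S : Type} [CommRing R] [CommRing S] (φ : R →+* S) (b : R) :
    (nbMat b).map φ = nbMat (φ b) := by
  ext i j; fin_cases i <;> fin_cases j <;> simp [nbMat]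

lemma bf_smul_matrix {ι R : Type} [Fintype ι] [CommRing R] (c : R) (A : Matrix ι ι R)
    (x y : ι → R) : bf (c • A) x y = c * bf A x y := by
  simp only [bf, Finset.mul_sum, Matrix.smul_apply, smul_eq_mul]
  refine Finset.sum_congr rfl fun i _ => Finset.sum_congr rfl fun j _ => by ring

lemma HasLag.not_aniso {ι F : Type} [Fintype ι] [Nonempty ι] [Field F] {A : Matrix ι ι F}
    (h : HasLag (mform A)) : ¬ Aniso A := by
  intro hA
  obtain ⟨W, hW, hd⟩ := h
  have : W = ⊥ := by
    rw [eq_bot_iff]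
    intro w hw
    exact hA w (hW w hw)
  rw [this, finrank_bot, Module.finrank_fintype_fun_eq_card] at hd
  have := Fintype.card_pos (α := ι)
  omega

/-- The quadratic extension defined by `Z² + p Z + r`. -/
lemma exists_quadratic_extension {E : Type} [Field E] (p r : E)
    (h : ∀ t : E, t ^ 2 + p * t + r ≠ 0) :
    ∃ (M : Type) (_ : Field M) (_ : Algebra E M) (B : Basis (Fin 2) E M), B 0 = 1 ∧
      B 1 ^ 2 + algebraMap E M p * B 1 + algebraMap E M r = 0 := by
  open Polynomial in
  let f : E[X] := X ^ 2 + C p * X + C r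
  have hdeg : f.natDegree = 2 := by simp only [f]; compute_degree!
  have hm : f.Monic := by simp only [f]; monicity!
  have hirr : Irreducible f := by
    rw [irreducible_iff_roots_eq_zero_of_degree_le_three (by omega) (by omega)]
    refine Multiset.eq_zero_of_forall_notMem fun t ht => h t ?_
    have := isRoot_of_mem_roots ht
    simpa [f, IsRoot] using this
  have : Fact (Irreducible f) := ⟨hirr⟩
  let pb := AdjoinRoot.powerBasis' hm
  have hdim : pb.dim = 2 := by simp [pb, hdeg]
  refine ⟨AdjoinRoot f, inferInstance, inferInstance, pb.basis.reindex (finCongr hdim), ?_, ?_⟩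
  · simp
  · have h1 : (pb.basis.reindex (finCongr hdim)) 1 = AdjoinRoot.root f := by
      simp [pb]
    rw [h1]
    have h3 := AdjoinRoot.eval₂_root f
    simpa [f] using h3

/-- An anisotropic form that becomes hyperbolic over `E(ζ)`, `ζ² + p ζ + r = 0`, has with
each value `q(v)` also the value `r q(v)`. -/
lemma exists_of_hasLag_quadratic {ι E M : Type} [Fintype ι] [Field E] [Field M] [Algebra E M]
    {A : Matrix ι ι E} (hA : Aniso A) (B : Basis (Fin 2) E M) (hB0 : B 0 = 1) (p r : E)
    (hB1 : B 1 ^ 2 + algebraMap E M p * B 1 + algebraMap E M r = 0)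
    (hl : HasLag (mform (A.map (algebraMap E M)))) (v : ι → E) :
    ∃ u, bf A u u = r * bf A v v := by
  obtain ⟨W, hW, hd⟩ := hl
  have hfin : FiniteDimensional E M := Module.Finite.of_basis B
  have h2 : finrank E M = 2 := by rw [Module.finrank_eq_card_basis B]; rfl
  have hdec : ∀ m : M, m = algebraMap E M (B.repr m 0) + algebraMap E M (B.repr m 1) * B 1 := by
    intro m
    conv_lhs => rw [← B.sum_repr m, Fin.sum_univ_two, hB0]
    simp [Algebra.smul_def]
  have hind : ∀ a b : E, algebraMap E M a + algebraMap E M b * B 1 = 0 → a = 0 := by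
    intro a b hab
    have h1 : a • B 0 + b • B 1 = 0 := by
      rw [hB0, Algebra.smul_def, Algebra.smul_def, mul_one, hab]
    have := congrArg (fun m => B.repr m 0) h1
    simpa using this
  let σ : W →ₗ[E] (ι → E) :=
    { toFun := fun w i => B.repr ((w : ι → M) i) 1
      map_add' := fun x y => by ext; simp
      map_smul' := fun c x => by ext; simp }
  have hσ : ∀ w i, σ w i = B.repr ((w : ι → M) i) 1 := fun _ _ => rfl
  have hinj : Function.Injective σ := by
    rw [← LinearMap.ker_eq_bot, LinearMap.ker_eq_bot']
    intro w hw
    have e1 : (w : ι → M) = algebraMap E M ∘ fun i => B.repr ((w : ι → M) i) 0 := by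
      ext i
      have h3 : B.repr ((w : ι → M) i) 1 = 0 := congrFun hw i
      have h4 := hdec ((w : ι → M) i)
      rw [h3] at h4
      simpa using h4
    have h3 := hW w w.2
    rw [mform_apply, e1, bf_map] at h3
    have h4 := hA _ ((map_eq_zero _).1 h3)
    rw [h4] at e1
    ext i
    rw [e1]; simp
  have hdim : finrank E W = 2 * finrank M W := by
    rw [← Module.finrank_mul_finrank E M W, h2]
  have hfW : FiniteDimensional E W := Module.Finite.trans M W
  have hsurj : Function.Surjective σ := by
    rw [← LinearMap.range_eq_top]
    apply Submodule.eq_top_of_finrank_eq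
    refine le_antisymm (Submodule.finrank_le _) ?_
    rw [LinearMap.finrank_range_of_inj hinj, hdim]
    simpa using hd
  obtain ⟨w, hw⟩ := hsurj v
  let u : ι → E := fun i => B.repr ((w : ι → M) i) 0
  have e1 : (w : ι → M) = algebraMap E M ∘ u + B 1 • (algebraMap E M ∘ v) := by
    ext i
    rw [hdec ((w : ι → M) i), ← hσ, hw]
    simp [u, mul_comm]
  have h3 := hW w w.2
  have hb := bf_map A (algebraMap E M)
  have hp := pl_map A (algebraMap E M)
  rw [mform_apply, e1, bf_add_self, bf_smul_self, pl_comm, pl_smul_left, hb, hb, hp] at h3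
  refine ⟨u, sub_eq_zero.1 (hind _ (pl A v u - p * bf A v v) ?_)⟩
  simp only [map_sub, map_mul]
  linear_combination h3 - algebraMap E M (bf A v v) * hB1

/-- The relevant case of the Hauptsatz of Arason and Pfister in characteristic 2: a sum of
multiples of fourfold Pfister forms that is Witt equivalent to a form of dimension less than 16
is trivial. -/
theorem hauptsatz (n : ℕ) : ∀ (F : Type) [Field F] [CharP F 2] (k : ℕ), k < 16 →
    ∀ (A : Matrix (Fin k) (Fin k) F) (hA : ND (mform A)), IsSum n (cls (mform A) hA) →
      cls (mform A) hA = 0 := by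
  induction n with
  | zero => intro F _ _ k _ A hA h; exact h
  | succ n ih =>
  intro F _ _ k hk A hA hsum
  obtain ⟨m, A₁, hA₁, hm, hcls, haniso⟩ := exists_aniso hA
  rw [hcls] at hsum ⊢
  have hmk : m < 16 := by
    simp at hm; omega
  obtain ⟨A, rfl⟩ := exists_mform A₁
  clear hcls hm
  have hAn : Aniso A := haniso
  clear haniso hk
  by_contra hne
  have hnl : ¬ HasLag (mform A) := fun h => hne (cls_eq_zero_iff.2 h)
  have hm0 : m ≠ 0 := by
    rintro rfl
    exact hnl ⟨⊥, by simp [bf], by simp⟩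
  have : Nonempty (Fin m) := ⟨⟨0, Nat.pos_of_ne_zero hm0⟩⟩
  obtain ⟨c, x, y, z, b, w', hw', hsum⟩ := hsum
  let π := pm (x : F) (pm (y : F) (pm (z : F) (nbMat b)))
  -- wherever the Pfister form becomes isotropic, induction applies and `A` becomes hyperbolic
  have R : ∀ (E : Type) [Field E] [CharP E 2] (φ : F →+* E) (v), v ≠ 0 →
      bf (π.map φ) v v = 0 → HasLag (mform (A.map φ)) := by
    intro E _ _ φ v hv hv0
    let _ := φ.toAlgebra
    have hφ : φ = algebraMap F E := rfl
    have hRd : Rd (π.map φ) (res E (P x (P y (P z (nb b))))) := by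
      rw [res_P, res_P, res_P, res_nb]
      simp only [π, pm_map, nbMat_map]
      exact (((rd_nbMat (algebraMap F E b)).pm (uu E z)).pm (uu E y)).pm (uu E x)
    have h0 := hRd.2 v hv hv0
    have h1 := congrArg (res E) hsum
    rw [map_add, res_smul, h0, smul_zero, add_zero, res_mform] at h1
    rw [hφ, ← cls_eq_zero_iff (h := hA₁.map_mform)]
    refine ih E m hmk _ _ ?_
    rw [h1]
    exact hw'.res E
  let i₀ : ((Fin 2 ⊕ Fin 2) ⊕ (Fin 2 ⊕ Fin 2)) ⊕ ((Fin 2 ⊕ Fin 2) ⊕ (Fin 2 ⊕ Fin 2)) :=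
    Sum.inl (Sum.inl (Sum.inl 0))
  let v₀ : Fin m → F := Pi.single ⟨0, Nat.pos_of_ne_zero hm0⟩ 1
  let c₀ := bf A v₀ v₀
  have hc₀ : c₀ ≠ 0 := by
    intro h
    have := congrFun (hAn v₀ h) ⟨0, Nat.pos_of_ne_zero hm0⟩
    simp [v₀] at this
  have hπ : Aniso π := by
    intro v hv
    by_contra hv0
    exact hnl (R F (RingHom.id F) v hv0 hv)
  have hπ' : Aniso (c₀ • π) := by
    intro v hv
    rw [bf_smul_matrix] at hv
    exact hπ v ((mul_eq_zero.1 hv).resolve_left hc₀)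
  have hle := card_le_of_represents A (c₀ • π) hAn hπ' ?_
  · simp at hle
    omega
  intro E _ _ φ hAE X
  have hXE : bf ((c₀ • π).map φ) X X = φ c₀ * bf (π.map φ) X X := by
    rw [← bf_smul_matrix]
    congr 1
    ext i j; simp
  rw [hXE]
  have hv₀ : bf (A.map φ) (φ ∘ v₀) (φ ∘ v₀) = φ c₀ := bf_map A φ v₀ v₀
  have hπE : Aniso (π.map φ) := by
    intro v hv
    by_contra hv0
    exact (R E φ v hv0 hv).not_aniso hAE
  have he : bf (π.map φ) (Pi.single i₀ 1) (Pi.single i₀ 1) = 1 := by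
    simp [bf, Pi.single_apply, π, i₀, pm, nbMat]
  by_cases hX : ∃ t : E, X = t • Pi.single i₀ 1
  · obtain ⟨t, rfl⟩ := hX
    refine ⟨t • (φ ∘ v₀), ?_⟩
    rw [bf_smul_self, bf_smul_self, he, hv₀]; ring
  have hroot : ∀ t : E, t ^ 2 + pl (π.map φ) (Pi.single i₀ 1) X * t + bf (π.map φ) X X ≠ 0 := by
    intro t ht
    apply hX
    refine ⟨-t, ?_⟩
    have h1 : t • Pi.single i₀ 1 + X = 0 := by
      apply hπE
      rw [bf_add_self, bf_smul_self, pl_smul_left, he]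
      linear_combination ht
    rw [neg_smul]
    exact (neg_eq_of_add_eq_zero_right h1).symm
  obtain ⟨M, _, _, B, hB0, hB1⟩ := exists_quadratic_extension _ _ hroot
  have hM : CharP M 2 := charP_of_injective_algebraMap (algebraMap E M).injective 2
  have hmm : ∀ {κ : Type} (D : Matrix κ κ F),
      D.map ((algebraMap E M).comp φ) = (D.map φ).map (algebraMap E M) := fun _ => rfl
  have hL : HasLag (mform ((A.map φ).map (algebraMap E M))) := by
    rw [← hmm]
    refine R M ((algebraMap E M).comp φ)
      (B 1 • (algebraMap E M ∘ Pi.single i₀ 1) + algebraMap E M ∘ X) ?_ ?_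
    · intro h
      have h1 := congrFun h i₀
      have h3 : B.repr (B 1 + X i₀ • B 0) 1 = 0 := by
        rw [hB0, Algebra.smul_def, mul_one]
        have : B 1 + algebraMap E M (X i₀) = 0 := by simpa using h1
        rw [this]; simp
      simp at h3
    · have hb := bf_map (π.map φ) (algebraMap E M)
      have hp := pl_map (π.map φ) (algebraMap E M)
      rw [hmm, bf_add_self, bf_smul_self, pl_smul_left, hb, hb, hp, he]
      linear_combination hB1 + B 1 ^ 2 * map_one (algebraMap E M)
  obtain ⟨u, hu⟩ := exists_of_hasLag_quadratic hAE B hB0 _ _ hB1 hL (φ ∘ v₀)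
  exact ⟨u, by rw [hu, hv₀, mul_comm]⟩

end Hauptsatz

/-! ### Descent for Albert forms -/

section Descent

lemma albertQF_apply {L : Type} [Field L] (a b : Fin 3 → L) (v : Fin 3 → Fin 2 → L) :
    albertQF a b v = ∑ i, a i * (v i 0 * v i 0 + v i 0 * v i 1 + b i * (v i 1 * v i 1)) := by
  simp only [albertQF, sum_apply, QuadraticMap.comp_apply, LinearMap.proj_apply]
  refine Finset.sum_congr rfl fun i _ => ?_
  simp [binQF, Matrix.toQuadraticMap', Matrix.toQuadraticForm', Matrix.toLinearMap₂'_apply,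
    Fin.sum_univ_two]
  ring

/-- A class in `I⁴` represented in dimension less than 16 is trivial. -/
lemma hasLag_of_mem_I4 {F V : Type} [Field F] [CharP F 2] [AddCommGroup V] [Module F V]
    [FiniteDimensional F V] {β : V →ₗ[F] V →ₗ[F] F} (hβ : ND β) (hd : finrank F V < 16)
    (h : cls β hβ ∈ I4 F) : HasLag β := by
  obtain ⟨n, hn⟩ := exists_isSum h
  obtain ⟨k, A, hA, hk, hcls, -⟩ := exists_aniso hβ
  obtain ⟨A, rfl⟩ := exists_mform A
  rw [hcls] at hn
  rw [← cls_eq_zero_iff (h := hβ), hcls]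
  exact hauptsatz n F k (by omega) A hA hn

lemma hasLag_of_ker {F V U : Type} [Field F] [AddCommGroup V] [Module F V] [AddCommGroup U]
    [Module F U] [FiniteDimensional F V] [FiniteDimensional F U] {β : V →ₗ[F] V →ₗ[F] F}
    (g : V →ₗ[F] U) (hg : ∀ v, g v = 0 → β v v = 0) (hd : 2 * finrank F U ≤ finrank F V) :
    HasLag β := by
  refine ⟨LinearMap.ker g, fun w hw => hg w hw, ?_⟩
  have h1 := LinearMap.finrank_range_add_finrank_ker g
  have h2 := Submodule.finrank_le (LinearMap.range g)
  omega

/-- The form `a₀ (b ⊗ [1,d₀]) ⊥ a₁ (b ⊗ [1,d₁]) ⊥ a₂ (b ⊗ [1,d₂])` for a symmetric bilinear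
form `b`. -/
def tri {K U : Type} [Field K] [AddCommGroup U] [Module K U] (b : U →ₗ[K] U →ₗ[K] K)
    (a : Fin 3 → Kˣ) (d : Fin 3 → K) :
    ((U × U) × ((U × U) × (U × U))) →ₗ[K] ((U × U) × ((U × U) × (U × U))) →ₗ[K] K :=
  osum ((a 0 : K) • twN b (d 0)) (osum ((a 1 : K) • twN b (d 1)) ((a 2 : K) • twN b (d 2)))

/-- The two models of the sixfold power of `U`. -/
def triEquiv (F U : Type) [Field F] [AddCommGroup U] [Module F U] :
    (Fin 3 → Fin 2 → U) ≃ₗ[F] ((U × U) × ((U × U) × (U × U))) where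
  toFun v := ((v 0 0, v 0 1), ((v 1 0, v 1 1), (v 2 0, v 2 1)))
  invFun x := ![![x.1.1, x.1.2], ![x.2.1.1, x.2.1.2], ![x.2.2.1, x.2.2.2]]
  map_add' _ _ := rfl
  map_smul' _ _ := rfl
  left_inv v := by
    ext i j; fin_cases i <;> fin_cases j <;> rfl
  right_inv x := rfl

lemma tri_apply_triEquiv {F K U : Type} [Field F] [Field K] [AddCommGroup U] [Module F U]
    [Module K U] (b : U →ₗ[K] U →ₗ[K] K) (a : Fin 3 → Kˣ) (d : Fin 3 → K)
    (v : Fin 3 → Fin 2 → U) : tri b a d (triEquiv F U v) (triEquiv F U v) =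
      ∑ i, (a i : K) * (b (v i 0) (v i 0) + b (v i 0) (v i 1) + d i * b (v i 1) (v i 1)) := by
  have h : triEquiv F U v = ((v 0 0, v 0 1), ((v 1 0, v 1 1), (v 2 0, v 2 1))) := rfl
  rw [h, Fin.sum_univ_three, add_assoc]
  simp [tri]

variable {K U : Type} [Field K] [CharP K 2] [AddCommGroup U] [Module K U]

lemma nd_tri {b : U →ₗ[K] U →ₗ[K] K} (hs : ∀ x y, b x y = b y x)
    (hn : ∀ x, (∀ y, b x y = 0) → x = 0) (a : Fin 3 → Kˣ) (d : Fin 3 → K) : ND (tri b a d) :=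
  ((nd_twN hs hn (d 0)).smul (a 0).ne_zero).osum
    (((nd_twN hs hn (d 1)).smul (a 1).ne_zero).osum ((nd_twN hs hn (d 2)).smul (a 2).ne_zero))

/-- The Witt class of the Albert form with the data `a`, `d`. -/
def albertCls (a : Fin 3 → Kˣ) (d : Fin 3 → K) : WG K :=
  a 0 • nb (d 0) + (a 1 • nb (d 1) + a 2 • nb (d 2))

lemma cls_tri_mul (a : Fin 3 → Kˣ) (d : Fin 3 → K) :
    cls (tri (LinearMap.mul K K) a d) (nd_tri mul_symm mul_nd a d) = albertCls a d := rfl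

lemma list_sum_smul_comm (L : List Kˣ) (a : Kˣ) (u : WG K) :
    (L.map fun c => c • (a • u)).sum = a • (L.map fun c => c • u).sum := by
  induction L with
  | nil => simp
  | cons c L ih =>
    rw [List.map_cons, List.sum_cons, ih, List.map_cons, List.sum_cons, smul_add,
      smul_smul, smul_smul, mul_comm]

lemma list_sum_smul_add (L : List Kˣ) (u v : WG K) :
    (L.map fun c => c • (u + v)).sum = (L.map fun c => c • u).sum + (L.map fun c => c • v).sum := by
  rw [← List.sum_map_add]
  simp only [smul_add]

lemma cls_tri [FiniteDimensional K U] {b : U →ₗ[K] U →ₗ[K] K} (hs : ∀ x y, b x y = b y x)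
    (hn : ∀ x, (∀ y, b x y = 0) → x = 0) (a : Fin 3 → Kˣ) (d : Fin 3 → K) (L : List Kˣ)
    (hL : ∀ d, cls (twN b d) (nd_twN hs hn d) = (L.map fun c => c • nb d).sum) :
    cls (tri b a d) (nd_tri hs hn a d) = (L.map fun c => c • albertCls a d).sum := by
  have h : cls (tri b a d) (nd_tri hs hn a d) = a 0 • cls (twN b (d 0)) (nd_twN hs hn (d 0)) +
      (a 1 • cls (twN b (d 1)) (nd_twN hs hn (d 1)) +
        a 2 • cls (twN b (d 2)) (nd_twN hs hn (d 2))) := rfl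
  rw [h, hL, hL, hL]
  simp only [albertCls, list_sum_smul_add, list_sum_smul_comm]

/-- Trivial Arf invariant places the Albert form in `I²`. -/
lemma albertCls_mem_I2 (a : Fin 3 → Kˣ) (d : Fin 3 → K) (z : K)
    (hz : z ^ 2 + z = d 0 + d 1 + d 2) : albertCls a d ∈ I2 K := by
  have h := nb_wp z
  rw [hz, nb_add, nb_add] at h
  have h2 : nb (d 2) = nb (d 0) + nb (d 1) := by
    linear_combination (norm := abel) h - WG.add_self (nb (d 0)) - WG.add_self (nb (d 1))
  have e : albertCls a d = P ((a 0)⁻¹ * a 2) (a 0 • nb (d 0)) +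
      P ((a 1)⁻¹ * a 2) (a 1 • nb (d 1)) := by
    simp only [albertCls, P_apply, smul_smul, h2, smul_add, inv_mul_cancel_comm]
    abel
  rw [e]
  exact add_mem (P_mem_I2 _ _) (P_mem_I2 _ _)

/-- The descent of the transfer condition, given a `K`-bilinear space of odd dimension whose
product with the Albert form has metabolic transfer. -/
lemma exists_hasLag {F : Type} [Field F] [CharP F 2] [Algebra F K] [FiniteDimensional F K]
    (h2 : finrank F K = 2) (s : K →ₗ[F] F) (hs0 : s ≠ 0) [Module F U] [IsScalarTower F K U]
    [FiniteDimensional F U] [FiniteDimensional K U]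
    {b : U →ₗ[K] U →ₗ[K] K} (hs : ∀ x y, b x y = b y x)
    (hn : ∀ x, (∀ y, b x y = 0) → x = 0) (hodd : Odd (finrank K U)) (a : Fin 3 → Kˣ)
    (d : Fin 3 → K) (z : K) (hz : z ^ 2 + z = d 0 + d 1 + d 2)
    (hl : HasLag (trForm s (tri b a d))) :
    ∃ μ : Kˣ, HasLag (trForm s ((μ : K) • tri (LinearMap.mul K K) a d)) := by
  obtain ⟨L, hL, hLd⟩ := exists_diag b hs hn
  have hLodd : Odd L.length := by
    rw [Nat.odd_iff] at hodd ⊢; omega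
  have h1 := list_sum_odd (I4 K) (albertCls a d)
    (fun x y => P_P_mem_I4 x y (albertCls_mem_I2 a d z hz)) L hLodd
  rw [← cls_tri hs hn a d L hLd] at h1
  have h3 := tr_mem_I4 s hs0 h2 h1
  rw [map_add, tr_cls, cls_eq_zero_iff.2 hl, zero_add, ← cls_tri_mul, smul_cls, tr_cls] at h3
  refine ⟨L.prod, hasLag_of_mem_I4 _ ?_ h3⟩
  simp [Module.finrank_prod, h2]

end Descent

end AlbertDescent

/-- **Going down for the descent invariant along odd degree extensions.**
Let `F` be a field of characteristic 2, `a ∈ F \ ℘(F)`, `K = F[α]` with `α² + α = a`.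
Let `B` be a biquaternion `K`-algebra with `cor_{K/F}(B) = 0` and `φ` an Albert form over
`K` (isometric to the diagonal form given by data `aa`, `bb`) with `C(φ) ≅ M₂(B)`.
Let `𝔽/F` be a field extension of odd (finite) degree and `𝕂 = 𝔽[α] = 𝔽 ⊗_F K`
(a field, with `𝔽`-basis `1, α`).  If there is `λ ∈ 𝕂^×` such that the `𝔽`-transfer
`s′₊(λ·φ_𝕂)` is hyperbolic over `𝔽` (here `φ_𝕂` is the scalar extension of `φ` to `𝕂`,
represented — up to isometry — by the extended Albert data), then there is `μ ∈ K^×`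
such that `s₊(μ·φ)` is hyperbolic over `F`. -/
theorem transfer_hyperbolic_of_odd_extension
    (F : Type) [Field F] [CharP F 2] (a : F) (ha : ∀ x : F, x ^ 2 + x ≠ a)
    (K : Type) [Field K] [Algebra F K]
    (α : K) (hα : α ^ 2 + α = algebraMap F K a)
    (bK : Basis (Fin 2) F K) (hb0 : bK 0 = 1) (hb1 : bK 1 = α)
    (s : K →ₗ[F] F) (hs1 : s 1 = 0) (hsα : s α = 1)
    -- `B` is a biquaternion algebra over `K`
    (B : Type) [Ring B] [Algebra K B]
    (hB : ∃ (Q₁ Q₂ : Type) (_ : Ring Q₁) (_ : Algebra K Q₁) (_ : Ring Q₂) (_ : Algebra K Q₂),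
        IsQuaternionAlgebra K Q₁ ∧ IsQuaternionAlgebra K Q₂ ∧
          Nonempty (B ≃ₐ[K] (Q₁ ⊗[K] Q₂)))
    -- `φ` is an Albert form over `K` ...
    (φ : QuadraticForm K (Fin 3 → Fin 2 → K))
    (aa bb : Fin 3 → K) (haa : ∀ i, aa i ≠ 0)
    (harf : ∃ z : K, z ^ 2 + z = bb 0 + bb 1 + bb 2)
    (hφ : QuadraticMap.Equivalent φ (albertQF aa bb))
    -- ... whose Clifford algebra is isomorphic to `M₂(B)` as a `K`-algebra
    (hC : Nonempty (CliffordAlgebra φ ≃ₐ[K] Matrix (Fin 2) (Fin 2) B))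
    -- `cor_{K/F}(B) = 0`: `B` is Brauer-equivalent to an algebra defined over `F`
    (hcor : ∃ (B' : Type) (_ : Ring B') (_ : Algebra F B'),
        Algebra.IsCentral F B' ∧ IsSimpleRing B' ∧ FiniteDimensional F B' ∧
        ∃ n m : ℕ, 0 < n ∧ 0 < m ∧
          Nonempty ((Matrix (Fin n) (Fin n) B) ≃ₐ[K] (Matrix (Fin m) (Fin m) (K ⊗[F] B'))))
    -- `𝔽` is a finite extension of `F` of odd degree
    (𝔽 : Type) [Field 𝔽] [Algebra F 𝔽] (hodd : Odd (Module.finrank F 𝔽))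
    -- `𝕂 = 𝔽[α] = 𝔽 ⊗_F K`, a field with `𝔽`-basis `1, α`
    (𝕂 : Type) [Field 𝕂] [Algebra F 𝕂] [Algebra 𝔽 𝕂] [Algebra K 𝕂]
    [IsScalarTower F 𝔽 𝕂] [IsScalarTower F K 𝕂]
    (b𝕂 : Basis (Fin 2) 𝔽 𝕂) (hb𝕂0 : b𝕂 0 = 1) (hb𝕂1 : b𝕂 1 = algebraMap K 𝕂 α)
    -- `s′ : 𝕂 → 𝔽` is the `𝔽`-linear map with `s′ 1 = 0`, `s′ α = 1`
    (s' : 𝕂 →ₗ[𝔽] 𝔽) (hs'1 : s' 1 = 0) (hs'α : s' (algebraMap K 𝕂 α) = 1)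
    -- hypothesis: some `𝕂^×`-multiple of `φ_𝕂` has hyperbolic transfer to `𝔽`
    (hyp : ∃ lam : 𝕂, lam ≠ 0 ∧
      ∃ e : (Fin 3 → Fin 2 → 𝕂) ≃ₗ[𝔽] (Fin 6 → Fin 2 → 𝔽),
        ∀ v, s' (lam * (albertQF (fun i => algebraMap K 𝕂 (aa i))
                                 (fun i => algebraMap K 𝕂 (bb i))) v) = hypVal (e v)) :
    -- conclusion: some `K^×`-multiple of `φ` has hyperbolic transfer to `F`
    ∃ μ : K, μ ≠ 0 ∧
      ∃ e : (Fin 3 → Fin 2 → K) ≃ₗ[F] (Fin 6 → Fin 2 → F),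
        ∀ v, s (μ * φ v) = hypVal (e v) := by
  have : CharP K 2 := charP_of_injective_algebraMap (algebraMap F K).injective 2
  have h2K : (2 : K) = 0 := CharTwo.two_eq_zero
  have : FiniteDimensional F K := Module.Finite.of_basis bK
  have hK2 : finrank F K = 2 := by rw [Module.finrank_eq_card_basis bK]; rfl
  have : FiniteDimensional F 𝔽 := Module.finite_of_finrank_pos hodd.pos
  have : FiniteDimensional 𝔽 𝕂 := Module.Finite.of_basis b𝕂
  have h𝕂2 : finrank 𝔽 𝕂 = 2 := by rw [Module.finrank_eq_card_basis b𝕂]; rfl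
  have : FiniteDimensional F 𝕂 := Module.Finite.trans 𝔽 𝕂
  have : FiniteDimensional K 𝕂 := Module.Finite.of_restrictScalars_finite F K 𝕂
  have hF𝕂 : finrank F 𝕂 = 2 * finrank F 𝔽 := by
    rw [← Module.finrank_mul_finrank F 𝔽 𝕂, h𝕂2, mul_comm]
  have hK𝕂 : finrank K 𝕂 = finrank F 𝔽 := by
    have := Module.finrank_mul_finrank F K 𝕂
    rw [hK2, hF𝕂] at this
    omega
  have hs0 : s ≠ 0 := by
    rintro rfl
    simp at hsα
  obtain ⟨lam, hlam, e, he⟩ := hyp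
  obtain ⟨t, ht⟩ : ∃ t : 𝔽 →ₗ[F] F, t 1 ≠ 0 := by
    by_contra! h
    exact one_ne_zero ((Module.forall_dual_apply_eq_zero_iff F (1 : 𝔽)).1 h)
  -- `T` is the `K`-linear extension of `t`, written in terms of `s'`
  let s'F : 𝕂 →ₗ[F] 𝔽 := s'.restrictScalars F
  have hα2 : (algebraMap K 𝕂 α) * (algebraMap K 𝕂 α) =
      algebraMap K 𝕂 α + algebraMap F 𝕂 a := by
    rw [IsScalarTower.algebraMap_apply F K 𝕂, ← hα, ← map_mul, ← map_add]
    congr 1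
    linear_combination -α * h2K
  have hαK : α * α = α + algebraMap F K a := by
    rw [← hα]
    linear_combination -α * h2K
  let T₀ : 𝕂 → K := fun m => algebraMap F K (t (s' (algebraMap K 𝕂 α * m) + s' m)) +
    algebraMap F K (t (s' m)) * α
  have hT₀add : ∀ m m', T₀ (m + m') = T₀ m + T₀ m' := by
    intro m m'
    simp only [T₀, mul_add, map_add]
    ring
  have hs'F : ∀ (c : F) (m : 𝕂), t (s' (algebraMap F 𝕂 c * m)) = c * t (s' m) := by
    intro c m
    have h1 : s' (algebraMap F 𝕂 c * m) = c • s' m := by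
      rw [← Algebra.smul_def]; exact s'F.map_smul c m
    rw [h1, map_smul, smul_eq_mul]
  have hT₀F : ∀ (c : F) m, T₀ (algebraMap F 𝕂 c * m) = algebraMap F K c * T₀ m := by
    intro c m
    simp only [T₀, map_add]
    rw [mul_left_comm, hs'F, hs'F]
    simp only [map_mul]
    ring
  have hT₀α : ∀ m, T₀ (algebraMap K 𝕂 α * m) = α * T₀ m := by
    intro m
    simp only [T₀, map_add]
    rw [← mul_assoc, hα2, add_mul, map_add, map_add, hs'F]
    simp only [map_add, map_mul]
    linear_combination (algebraMap F K (t (s' (algebraMap K 𝕂 α * m)))) * h2K -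
      algebraMap F K (t (s' m)) * (hαK + α * h2K)
  let T : 𝕂 →ₗ[K] K :=
    { toFun := T₀
      map_add' := hT₀add
      map_smul' := by
        intro c m
        have hc : c = algebraMap F K (bK.repr c 0) + algebraMap F K (bK.repr c 1) * α := by
          conv_lhs => rw [← bK.sum_repr c, Fin.sum_univ_two, hb0, hb1]
          simp [Algebra.smul_def]
        rw [hc]
        generalize bK.repr c 0 = p
        generalize bK.repr c 1 = q
        rw [Algebra.smul_def, map_add, map_mul, ← IsScalarTower.algebraMap_apply,
          ← IsScalarTower.algebraMap_apply, add_mul, mul_assoc, hT₀add, hT₀F, hT₀F, hT₀α]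
        simp only [RingHom.id_apply, smul_eq_mul]
        ring }
  have hsT : ∀ m, s (T m) = t (s' m) := by
    intro m
    show s (T₀ m) = _
    have hsF : ∀ (c : F) (x : K), s (algebraMap F K c * x) = c * s x := fun c x => by
      rw [← Algebra.smul_def, map_smul, smul_eq_mul]
    simp only [T₀]
    rw [map_add, ← mul_one (algebraMap F K (t (_ + _))), hsF, hsF, hs1, hsα, mul_zero, mul_one,
      zero_add]
  let b : 𝕂 →ₗ[K] 𝕂 →ₗ[K] K := (LinearMap.mul K 𝕂).compr₂ (T ∘ₗ LinearMap.mulLeft K lam)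
  have hb : ∀ x y, b x y = T (lam * (x * y)) := fun x y => rfl
  have hbs : ∀ x y, b x y = b y x := fun x y => by rw [hb, hb, mul_comm x]
  have hbn : ∀ x, (∀ y, b x y = 0) → x = 0 := by
    intro x hx
    by_contra hx0
    apply ht
    have h1 := hx ((lam * x)⁻¹ * algebraMap K 𝕂 α)
    rw [hb, ← mul_assoc, mul_inv_cancel_left₀ (mul_ne_zero hlam hx0)] at h1
    have h3 := hsT (algebraMap K 𝕂 α)
    rw [h1, hs'α, map_zero] at h3
    exact h3.symm
  let aU : Fin 3 → Kˣ := fun i => Units.mk0 (aa i) (haa i)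
  obtain ⟨z, hz⟩ := harf
  -- the Lagrangian over `𝔽` of the given hyperbolic form stays one for its transfer to `F`
  let g : ((𝕂 × 𝕂) × ((𝕂 × 𝕂) × (𝕂 × 𝕂))) →ₗ[F] (Fin 6 → 𝔽) :=
    { toFun := fun x i => e ((AlbertDescent.triEquiv F 𝕂).symm x) i 0
      map_add' := fun x y => by ext i; simp
      map_smul' := fun c x => by
        ext i
        have : (AlbertDescent.triEquiv F 𝕂).symm (c • x) =
            algebraMap F 𝔽 c • (AlbertDescent.triEquiv F 𝕂).symm x := by
          rw [map_smul, algebraMap_smul]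
        rw [this, map_smul]
        simp [Algebra.smul_def] }
  have hlag : AlbertDescent.HasLag (AlbertDescent.trForm s (AlbertDescent.tri b aU bb)) := by
    refine AlbertDescent.hasLag_of_ker g ?_ ?_
    · intro x hx
      obtain ⟨v, rfl⟩ := (AlbertDescent.triEquiv F 𝕂).surjective x
      have hv : ∀ i, e v i 0 = 0 := fun i => by
        have := congrFun hx i
        simpa [g] using this
      have h1 := he v
      rw [AlbertDescent.albertQF_apply] at h1
      have h3 : AlbertDescent.tri b aU bb (AlbertDescent.triEquiv F 𝕂 v)
          (AlbertDescent.triEquiv F 𝕂 v) = T (lam * ∑ i, algebraMap K 𝕂 (aa i) *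
            (v i 0 * v i 0 + v i 0 * v i 1 + algebraMap K 𝕂 (bb i) * (v i 1 * v i 1))) := by
        have hTs : ∀ (c : K) m, T (algebraMap K 𝕂 c * m) = c * T m := fun c m => by
          rw [← Algebra.smul_def, map_smul, smul_eq_mul]
        have hterm : ∀ i, T (lam * (algebraMap K 𝕂 (aa i) *
            (v i 0 * v i 0 + v i 0 * v i 1 + algebraMap K 𝕂 (bb i) * (v i 1 * v i 1)))) =
            aa i * (b (v i 0) (v i 0) + b (v i 0) (v i 1) + bb i * b (v i 1) (v i 1)) := by
          intro i
          rw [mul_left_comm, hTs, mul_add, mul_add, map_add, map_add, mul_left_comm lam (algebraMap K 𝕂 (bb i)), hTs]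
          rfl
        rw [Finset.mul_sum, map_sum, AlbertDescent.tri_apply_triEquiv]
        exact Finset.sum_congr rfl fun i _ => (hterm i).symm
      rw [AlbertDescent.trForm_apply, h3, hsT, h1]
      simp [hypVal, hv]
    · simp only [Module.finrank_prod, Module.finrank_pi_fintype, hF𝕂]
      simp
      omega
  obtain ⟨μ, hμ⟩ := AlbertDescent.exists_hasLag hK2 s hs0 hbs hbn (by rwa [hK𝕂]) aU bb z hz hlag
  obtain ⟨e', he'⟩ := AlbertDescent.HasLag.exists_hyperbolic 6 _ _
    (((AlbertDescent.nd_tri AlbertDescent.mul_symm AlbertDescent.mul_nd aU bb).smul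
      μ.ne_zero).trForm hs0) hμ (by simp [Module.finrank_prod, hK2])
  obtain ⟨f⟩ := hφ
  refine ⟨μ, μ.ne_zero, ((f.toLinearEquiv.restrictScalars F).trans
    (AlbertDescent.triEquiv F K)).trans e', fun v => ?_⟩
  have h1 := he' (AlbertDescent.triEquiv F K (f v))
  refine Eq.trans ?_ h1
  rw [AlbertDescent.trForm_apply, ← f.map_app v, AlbertDescent.albertQF_apply,
    LinearMap.smul_apply, LinearMap.smul_apply, AlbertDescent.tri_apply_triEquiv]
  rfl
end

section
/- Let L be a field of characteristic 2, let n ≥ 2, let x₁, …, xₙ ∈ L^× with x₁ + x₂ + ⋯ + xₙ = 0, and let d₁, …, dₙ ∈ L. Then the quadratic form x₁[1,d₁] ⊥ x₂[1,d₂] ⊥ ⋯ ⊥ xₙ[1,dₙ] is isometric to H ⊥ x₂[1, d₂ + x₂x₁⁻¹d₁] ⊥ x₃[1, d₃ + x₃x₁⁻¹d₁] ⊥ ⋯ ⊥ xₙ[1, dₙ + xₙx₁⁻¹d₁]. -/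
/-!
In the coordinates `v i = (aᵢ, bᵢ)`, i.e. with respect to a basis `eᵢ, fᵢ`, the vector
`e = ∑ eᵢ` is isotropic because `∑ xᵢ = 0`.  With `c = x₀⁻¹ d₀`, the vector `g = x₀⁻¹ f₀ + c e` is
isotropic too and pairs to `1` with `e`, so `e, g` span a hyperbolic plane.  The planes spanned by
`eᵢ` and `fᵢ + xᵢ x₀⁻¹ f₀` for `i ≠ 0` are orthogonal to it and to each other, and carry the forms
`xᵢ[1, dᵢ + xᵢ x₀⁻¹ d₀]`.  The coordinates with respect to this new basis are, with
`S = ∑ xᵢ bᵢ`, the pair `(a₀ + c S, S)` on the hyperbolic plane and `(aᵢ + a₀, bᵢ)` on the `i`-th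
plane.  This map is `splitMap`; it is injective, hence bijective by finite dimension, and the
isometry identity reduces to `S² = ∑ xᵢ² bᵢ²`, the additivity of squaring in characteristic 2.
-/

/-- The change of coordinates `v ↦ w` that splits off the plane at the index `o`:
`w o = (a_o + c S, S)` with `S = ∑ xᵢ bᵢ`, and `w i = (aᵢ + a_o, bᵢ)` for `i ≠ o`,
where `v i = (aᵢ, bᵢ)`. -/
def splitMap {L : Type} [Field L] {n : ℕ} (o : Fin n) (x : Fin n → L) (c : L) :
    (Fin n → Fin 2 → L) →ₗ[L] (Fin n → Fin 2 → L) where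
  toFun v i := if i = o then ![v o 0 + c * ∑ j, x j * v j 1, ∑ j, x j * v j 1]
    else ![v i 0 + v o 0, v i 1]
  map_add' u v := by
    funext i k
    by_cases h : i = o <;> fin_cases k <;>
      simp [h, mul_add, Finset.sum_add_distrib] <;> ring
  map_smul' r v := by
    have hS : ∑ j, x j * (r * v j 1) = r * ∑ j, x j * v j 1 := by
      rw [Finset.mul_sum]
      exact Finset.sum_congr rfl fun j _ => by ring
    funext i k
    by_cases h : i = o <;> fin_cases k <;> simp [h, hS] <;> ring

lemma splitMap_injective {L : Type} [Field L] {n : ℕ} (o : Fin n) (x : Fin n → L) (c : L)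
    (hx : x o ≠ 0) : Function.Injective (splitMap o x c) := by
  rw [injective_iff_map_eq_zero]
  intro v hv
  have key : ∀ i k, splitMap o x c v i k = 0 := fun i k => by rw [hv]; rfl
  have hS : ∑ j, x j * v j 1 = 0 := by simpa [splitMap] using key o 1
  have ha : v o 0 = 0 := by simpa [splitMap, hS] using key o 0
  have hb : ∀ i, i ≠ o → v i 1 = 0 := fun i hi => by simpa [splitMap, hi] using key i 1
  -- All other terms of `S` vanish, so `S = 0` forces `b_o = 0`.
  have hbo : v o 1 = 0 := by
    rw [Finset.sum_eq_single o (fun i _ hi => by rw [hb i hi, mul_zero]) (by simp)] at hS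
    exact (mul_eq_zero.mp hS).resolve_left hx
  funext i k
  by_cases hi : i = o
  · subst hi
    fin_cases k
    · exact ha
    · exact hbo
  · fin_cases k
    · simpa [splitMap, hi, ha] using key i 0
    · exact hb i hi

/-- The isometry identity at an arbitrary index `o`. -/
lemma splitMap_isometry {L : Type} [Field L] [CharP L 2] {n : ℕ} (o : Fin n) (x : Fin n → L)
    (hx : x o ≠ 0) (hsum : ∑ i, x i = 0) (d : Fin n → L) (v w : Fin n → Fin 2 → L)
    (hw : w = splitMap o x ((x o)⁻¹ * d o) v) :
    (∑ i, x i * ((v i 0) ^ 2 + v i 0 * v i 1 + d i * (v i 1) ^ 2)) =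
      w o 0 * w o 1 + ∑ i : Fin n, if i = o then 0 else
        x i * ((w i 0) ^ 2 + w i 0 * w i 1 +
          (d i + x i * (x o)⁻¹ * d o) * (w i 1) ^ 2) := by
  have h2 : (2 : L) = 0 := CharTwo.two_eq_zero
  set c := (x o)⁻¹ * d o with hc
  set S := ∑ j, x j * v j 1 with hS
  have hw0 : w o 0 = v o 0 + c * S := by simp [hw, splitMap, hS]
  have hw1 : w o 1 = S := by simp [hw, splitMap, hS]
  have hSq : S ^ 2 = ∑ i, (x i * v i 1) ^ 2 := CharTwo.sum_sq _ _
  -- The omitted term `i = o` may be put back in: with `a_o + a_o = 0` and `d_o + x_o c = 0`, the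
  -- common formula vanishes there.
  have hterm : ∀ i, (if i = o then 0 else
        x i * ((w i 0) ^ 2 + w i 0 * w i 1 + (d i + x i * (x o)⁻¹ * d o) * (w i 1) ^ 2)) =
      x i * ((v i 0) ^ 2 + v i 0 * v i 1 + d i * (v i 1) ^ 2) + (v o 0) ^ 2 * x i
        + v o 0 * (x i * v i 1) + c * (x i * v i 1) ^ 2 := by
    intro i
    by_cases hi : i = o
    · subst hi
      have hxc : x i * c = d i := by rw [hc, mul_inv_cancel_left₀ hx]
      rw [if_pos rfl]
      linear_combination (-(x i * (v i 1) ^ 2)) * hxc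
        - (x i * (v i 0) ^ 2 + x i * v i 0 * v i 1 + x i * d i * (v i 1) ^ 2) * h2
    · have hi0 : w i 0 = v i 0 + v o 0 := by simp [hw, splitMap, hi]
      have hi1 : w i 1 = v i 1 := by simp [hw, splitMap, hi]
      rw [if_neg hi, hi0, hi1]
      linear_combination (x i * v i 0 * v o 0) * h2
  rw [Finset.sum_congr rfl fun i _ => hterm i]
  simp only [Finset.sum_add_distrib, ← Finset.mul_sum]
  rw [← hSq, ← hS, hsum, hw0, hw1]
  linear_combination (-(v o 0 * S + c * S ^ 2)) * h2

/-- Let `L` be a field of characteristic 2, `n ≥ 2`, `x₀, …, x_{n-1} ∈ L^×` with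
`x₀ + ⋯ + x_{n-1} = 0`, and `d₀, …, d_{n-1} ∈ L`.  Then the quadratic form
`x₀[1,d₀] ⊥ x₁[1,d₁] ⊥ ⋯ ⊥ x_{n-1}[1,d_{n-1}]` is isometric to
`H ⊥ x₁[1, d₁ + x₁x₀⁻¹d₀] ⊥ ⋯ ⊥ x_{n-1}[1, d_{n-1} + x_{n-1}x₀⁻¹d₀]`,
where `[c,b](x,y) = c x² + x y + b y²` (so `c[1,b](x,y) = c x² + c x y + c b y²`) and
`H` is the hyperbolic plane `(x,y) ↦ x y`. -/
theorem isotropy_splits_hyperbolic_plane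
    (L : Type) [Field L] [CharP L 2] (n : ℕ) (hn : 2 ≤ n)
    (x : Fin n → L) (hx : ∀ i, x i ≠ 0) (hsum : ∑ i, x i = 0) (d : Fin n → L) :
    ∃ σ : (Fin n → Fin 2 → L) ≃ₗ[L] (Fin n → Fin 2 → L),
      ∀ v : Fin n → Fin 2 → L,
        (∑ i, x i * ((v i 0) ^ 2 + v i 0 * v i 1 + d i * (v i 1) ^ 2)) =
          (σ v ⟨0, by omega⟩ 0 * σ v ⟨0, by omega⟩ 1) +
            ∑ i : Fin n, if i = (⟨0, by omega⟩ : Fin n) then 0 else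
              x i * ((σ v i 0) ^ 2 + σ v i 0 * σ v i 1 +
                (d i + x i * (x ⟨0, by omega⟩)⁻¹ * d ⟨0, by omega⟩) * (σ v i 1) ^ 2) := by
  exact ⟨LinearEquiv.ofInjectiveEndo _ (splitMap_injective ⟨0, by omega⟩ x
      ((x ⟨0, by omega⟩)⁻¹ * d ⟨0, by omega⟩) (hx _)), fun v =>
    splitMap_isometry ⟨0, by omega⟩ x (hx _) hsum d v _ rfl⟩
end
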